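/- arXiv:1607.08576 — 2 statements merged into one kernel-verified Lean document; each statement's English description precedes it below -/
import Mathlib

section
/- For any sequence x_1,...,x_N in 𝕋^d, the isotropic discrepancy J_N and the (box) discrepancy D_N satisfy D_N ≤ J_N ≤ (4d√d + 1)·D_N^{1/d}. -/
open MeasureTheory

/-- The box (extreme) discrepancy of a finite sequence `x 0, ..., x (N-1)` in `[0,1)^d`:
sup over axis-parallel boxes `∏ [a i, b i)` of `|A(C)/N - vol C|`. -/
noncomputable def boxDiscrepancy (d N : ℕ) (x : Fin N → (Fin d → ℝ)) : ℝ :=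
  sSup {r : ℝ | ∃ a b : Fin d → ℝ,
    (∀ i, 0 ≤ a i ∧ a i ≤ b i ∧ b i ≤ 1) ∧
    r = |(∑ n : Fin N, Set.indicator {y | ∀ i, a i ≤ y i ∧ y i < b i}
            (fun _ => (1 : ℝ)) (x n)) / N - ∏ i, (b i - a i)|}

/-- The isotropic discrepancy of a finite sequence `x 0, ..., x (N-1)` in `[0,1)^d`:
sup over convex subsets `C ⊆ [0,1]^d` of `|A(C)/N - vol C|`. -/
noncomputable def isotropicDiscrepancy (d N : ℕ) (x : Fin N → (Fin d → ℝ)) : ℝ :=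
  sSup {r : ℝ | ∃ C : Set (Fin d → ℝ), Convex ℝ C ∧
    C ⊆ {y | ∀ i, 0 ≤ y i ∧ y i ≤ 1} ∧
    r = |(∑ n : Fin N, Set.indicator C (fun _ => (1 : ℝ)) (x n)) / N -
      (volume C).toReal|}


def cube (d : ℕ) : Set (Fin d → ℝ) := {y | ∀ i, 0 ≤ y i ∧ y i ≤ 1}

lemma cube_eq (d : ℕ) : cube d = Set.Icc 0 1 := by
  ext y; simp [cube, Pi.le_def, forall_and]

lemma cube_vol (d : ℕ) : volume (cube d) = 1 := by
  rw [cube_eq, Real.volume_Icc_pi]; simp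

lemma cube_compact (d : ℕ) : IsCompact (cube d) := by
  rw [cube_eq]; exact isCompact_Icc

lemma cube_convex (d : ℕ) : Convex ℝ (cube d) := by
  rw [cube_eq]; exact convex_Icc _ _

/-- Tonelli bound: all fibres in direction `k` small implies the volume is small. -/
lemma fibre_bound (m : ℕ) (k : Fin (m+1)) (S : Set (Fin (m+1) → ℝ)) (hS : MeasurableSet S)
    (hc : S ⊆ cube (m+1)) (c : ENNReal)
    (h : ∀ y : Fin (m+1) → ℝ, volume {t : ℝ | Function.update y k t ∈ S} ≤ c) :
    volume S ≤ c := by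
  have e := volume_preserving_piFinSuccAbove (fun _ : Fin (m+1) => ℝ) k
  have e' := e.symm
  rw [← e'.measure_preimage hS.nullMeasurableSet, Measure.volume_eq_prod,
    Measure.prod_apply_symm (e'.measurable hS)]
  calc _ ≤ ∫⁻ z : Fin m → ℝ, (cube m).indicator (fun _ => c) z := by
        apply lintegral_mono
        intro z
        by_cases hz : z ∈ cube m
        · rw [Set.indicator_of_mem hz]
          refine le_trans (measure_mono ?_) (h (k.insertNth 0 z))
          intro t ht
          simp only [Set.mem_preimage, Set.mem_ofPred_eq] at ht ⊢
          convert ht using 1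
          simp [MeasurableEquiv.piFinSuccAbove, Fin.insertNthEquiv]
        · rw [Set.indicator_of_notMem hz]
          refine le_of_eq ?_
          convert measure_empty (μ := (volume : Measure ℝ))
          ext t
          simp only [Set.mem_preimage, Set.mem_empty_iff_false, iff_false]
          intro ht
          apply hz
          intro i
          have := hc ht (k.succAbove i)
          simpa [MeasurableEquiv.piFinSuccAbove, Fin.insertNthEquiv] using this
    _ = c := by
        rw [lintegral_indicator_const (cube_compact m).measurableSet, cube_vol, mul_one]

lemma fibre_1d_outer (F F' : Set ℝ) (hF : F.OrdConnected) (hb : F ⊆ Set.Icc 0 1) (ε : ℝ)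
    (hε : 0 ≤ ε) (h : ∀ t ∈ F', ∃ s ∈ F, |t - s| ≤ ε) :
    volume (F' \ F) ≤ ENNReal.ofReal (2 * ε) := by
  rcases F.eq_empty_or_nonempty with rfl | hne
  · have : F' = ∅ := by
      ext t; simp; intro ht; simpa using h t ht
    simp [this]
  have hA : BddAbove F := bddAbove_Icc.mono hb
  have hB : BddBelow F := bddBelow_Icc.mono hb
  have : F' \ F ⊆ Set.Icc (sInf F - ε) (sInf F) ∪ Set.Icc (sSup F) (sSup F + ε) := by
    rintro t ⟨ht, htF⟩
    obtain ⟨s, hs, hst⟩ := h t ht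
    have h1 := csInf_le hB hs
    have h2 := le_csSup hA hs
    rw [abs_le] at hst
    by_contra hcon
    simp only [Set.mem_union, Set.mem_Icc, not_or, not_and, not_le] at hcon
    have h3 : sInf F < t := hcon.1 (by linarith)
    have h4 : t < sSup F := by
      by_contra h5
      have := hcon.2 (not_lt.mp h5)
      linarith
    obtain ⟨u, hu, hut⟩ := exists_lt_of_csInf_lt hne h3
    obtain ⟨v, hv, hvt⟩ := exists_lt_of_lt_csSup hne h4
    exact htF (hF.out hu hv ⟨hut.le, hvt.le⟩)
  refine (measure_mono this).trans ((measure_union_le _ _).trans ?_)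
  rw [Real.volume_Icc, Real.volume_Icc, ← ENNReal.ofReal_add (by linarith) (by linarith)]
  apply ENNReal.ofReal_le_ofReal
  linarith

lemma fibre_1d_inner (F : Set ℝ) (hF : F.OrdConnected) (hb : F ⊆ Set.Icc 0 1) (ε : ℝ)
    (hε : 0 ≤ ε) :
    volume (F \ {t | t + ε ∈ F ∧ t - ε ∈ F}) ≤ ENNReal.ofReal (2 * ε) := by
  rcases F.eq_empty_or_nonempty with rfl | hne
  · simp
  have hA : BddAbove F := bddAbove_Icc.mono hb
  have hB : BddBelow F := bddBelow_Icc.mono hb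
  have : F \ {t | t + ε ∈ F ∧ t - ε ∈ F} ⊆
      Set.Icc (sInf F) (sInf F + ε) ∪ Set.Icc (sSup F - ε) (sSup F) := by
    rintro t ⟨ht, htF⟩
    have h1 := csInf_le hB ht
    have h2 := le_csSup hA ht
    by_contra hcon
    simp only [Set.mem_union, Set.mem_Icc, not_or, not_and, not_le] at hcon
    have h3 : sInf F < t - ε := by linarith [hcon.1 h1]
    have h4 : t + ε < sSup F := by
      by_contra h5
      have := hcon.2 (by linarith)
      linarith
    obtain ⟨u, hu, hut⟩ := exists_lt_of_csInf_lt hne h3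
    obtain ⟨v, hv, hvt⟩ := exists_lt_of_lt_csSup hne h4
    exact htF ⟨hF.out hu hv ⟨by linarith, hvt.le⟩, hF.out hu hv ⟨hut.le, by linarith⟩⟩
  refine (measure_mono this).trans ((measure_union_le _ _).trans ?_)
  rw [Real.volume_Icc, Real.volume_Icc, ← ENNReal.ofReal_add (by linarith) (by linarith)]
  apply ENNReal.ofReal_le_ofReal
  linarith

lemma fibre_ordConnected {d : ℕ} (C : Set (Fin d → ℝ)) (hC : Convex ℝ C) (k : Fin d)
    (y : Fin d → ℝ) : {t : ℝ | Function.update y k t ∈ C}.OrdConnected := by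
  apply Convex.ordConnected
  intro s hs t ht a b ha hb hab
  have := hC hs ht ha hb hab
  simp only [Set.mem_ofPred_eq]
  convert this using 1
  ext i
  by_cases hi : i = k
  · subst hi; simp
  · simp [hi, ← add_mul, hab]

lemma fibre_sub {d : ℕ} (C : Set (Fin d → ℝ)) (hC : C ⊆ cube d) (k : Fin d)
    (y : Fin d → ℝ) : {t : ℝ | Function.update y k t ∈ C} ⊆ Set.Icc 0 1 := by
  intro t ht
  simpa using hC ht k

open scoped Pointwise in
lemma outer_step (m : ℕ) (k : Fin (m+1)) (C : Set (Fin (m+1) → ℝ)) (hC : Convex ℝ C)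
    (hK : IsCompact C) (hc : C ⊆ cube (m+1)) (ε : ℝ) (hε : 0 ≤ ε) :
    ∃ C' : Set (Fin (m+1) → ℝ), Convex ℝ C' ∧ IsCompact C' ∧ C' ⊆ cube (m+1) ∧ C ⊆ C' ∧
      volume C' ≤ volume C + ENNReal.ofReal (2 * ε) ∧
      ∀ y ∈ C, ∀ t : ℝ, |t - y k| ≤ ε → 0 ≤ t → t ≤ 1 → Function.update y k t ∈ C' := by
  classical
  let L : Set (Fin (m+1) → ℝ) := (fun t : ℝ => Pi.single k t) '' Set.Icc (-ε) ε
  have hLc : IsCompact L := isCompact_Icc.image (continuous_single (A := fun _ : Fin (m+1) => ℝ) k)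
  have hLx : Convex ℝ L := by
    have := (convex_Icc (-ε) ε).linear_image (LinearMap.single ℝ (fun _ : Fin (m+1) => ℝ) k)
    exact this
  have h5 : C ⊆ (C + L) ∩ cube (m+1) := by
    intro y hy
    exact ⟨⟨y, hy, 0, ⟨0, ⟨by linarith, hε⟩, by simp⟩, by simp⟩, hc hy⟩
  have h2 : IsCompact ((C + L) ∩ cube (m+1)) := (hK.add hLc).inter (cube_compact _)
  refine ⟨(C + L) ∩ cube (m+1), (hC.add hLx).inter (cube_convex _), h2,
    Set.inter_subset_right, h5, ?_, ?_⟩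
  · have : volume (((C + L) ∩ cube (m+1)) \ C) ≤ ENNReal.ofReal (2 * ε) := by
      apply fibre_bound m k _ (h2.measurableSet.diff hK.measurableSet)
        (Set.sdiff_subset.trans Set.inter_subset_right)
      intro y
      refine fibre_1d_outer {t : ℝ | Function.update y k t ∈ C}
        {t : ℝ | Function.update y k t ∈ (C + L) ∩ cube (m+1)}
        (fibre_ordConnected C hC k y) (fibre_sub C hc k y) ε hε ?_
      rintro t ⟨⟨p, hp, _, ⟨s, hs, rfl⟩, hps⟩, -⟩
      refine ⟨t - s, ?_, by simpa [abs_le] using hs⟩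
      have : Function.update y k (t - s) = p := by
        ext i
        have := congrFun hps i
        by_cases hi : i = k
        · subst hi
          simp at this ⊢; linarith
        · simp [hi] at this ⊢; linarith
      simpa [this] using hp
    calc _ ≤ volume (C ∪ (((C + L) ∩ cube (m+1)) \ C)) := measure_mono (by
            rw [Set.union_sdiff_self]; exact Set.subset_union_right)
      _ ≤ _ := measure_union_le _ _
      _ ≤ _ := by gcongr
  · intro y hy t ht h0 h1
    refine ⟨⟨y, hy, Pi.single k (t - y k), ⟨t - y k, by simpa [abs_le] using ht, rfl⟩, ?_⟩, ?_⟩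
    · ext i
      by_cases hi : i = k
      · subst hi; simp
      · simp [hi]
    · intro i
      by_cases hi : i = k
      · subst hi; simp [h0, h1]
      · simpa [hi] using hc hy i

lemma inner_step (m : ℕ) (k : Fin (m+1)) (C : Set (Fin (m+1) → ℝ)) (hC : Convex ℝ C)
    (hK : IsOpen C) (hc : C ⊆ cube (m+1)) (ε : ℝ) (hε : 0 ≤ ε) :
    ∃ C' : Set (Fin (m+1) → ℝ), Convex ℝ C' ∧ IsOpen C' ∧ C' ⊆ C ∧
      volume C ≤ volume C' + ENNReal.ofReal (2 * ε) ∧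
      ∀ y ∈ C', ∀ t : ℝ, |t - y k| ≤ ε → Function.update y k t ∈ C := by
  classical
  let E : Set (Fin (m+1) → ℝ) :=
    {y | y + Pi.single k ε ∈ C} ∩ {y | y - Pi.single k ε ∈ C}
  have hEx : Convex ℝ E := by
    intro u hu v hv a b ha hb hab
    have e : Pi.single k ε = a • Pi.single k ε + b • (Pi.single k ε : Fin (m+1) → ℝ) := by
      rw [← add_smul, hab, one_smul]
    refine ⟨?_, ?_⟩
    · have := hC hu.1 hv.1 ha hb hab
      simp only [Set.mem_ofPred_eq]
      convert this using 1
      rw [smul_add, smul_add]; nth_rewrite 1 [e]; abel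
    · have := hC hu.2 hv.2 ha hb hab
      simp only [Set.mem_ofPred_eq]
      convert this using 1
      rw [smul_sub, smul_sub]; nth_rewrite 1 [e]; abel
  have hEo : IsOpen E := (hK.preimage (by fun_prop)).inter (hK.preimage (by fun_prop))
  have up : ∀ (y : Fin (m+1) → ℝ) (s : ℝ), Function.update y k (y k + s) = y + Pi.single k s := by
    intro y s
    ext i
    by_cases hi : i = k
    · subst hi; simp
    · simp [hi]
  have um : ∀ (y : Fin (m+1) → ℝ) (s : ℝ), Function.update y k (y k - s) = y - Pi.single k s := by
    intro y s
    ext i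
    by_cases hi : i = k
    · subst hi; simp
    · simp [hi]
  have key : ∀ y ∈ E, ∀ t : ℝ, |t - y k| ≤ ε → Function.update y k t ∈ C := by
    intro y hy t ht
    have h := fibre_ordConnected C hC k y
    rw [abs_le] at ht
    refine h.out (x := y k - ε) (y := y k + ε) ?_ ?_ ⟨by linarith, by linarith⟩
    · simp only [Set.mem_ofPred_eq, um]; exact hy.2
    · simp only [Set.mem_ofPred_eq, up]; exact hy.1
  have hEC : E ⊆ C := by
    intro y hy
    simpa using key y hy (y k) (by simpa using hε)
  refine ⟨E, hEx, hEo, hEC, ?_, key⟩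
  have : volume (C \ E) ≤ ENNReal.ofReal (2 * ε) := by
    apply fibre_bound m k _ (hK.measurableSet.diff hEo.measurableSet) (Set.sdiff_subset.trans hc)
    intro y
    refine le_trans (le_of_eq ?_) (fibre_1d_inner {t : ℝ | Function.update y k t ∈ C}
      (fibre_ordConnected C hC k y) (fibre_sub C hc k y) ε hε)
    congr 1
    ext t
    have h1 := up (Function.update y k t) ε
    have h2 := um (Function.update y k t) ε
    simp at h1 h2
    simp [E, h1, h2]
  calc _ ≤ volume (E ∪ (C \ E)) := measure_mono (by
            rw [Set.union_sdiff_self]; exact Set.subset_union_right)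
      _ ≤ _ := measure_union_le _ _
      _ ≤ _ := by gcongr

lemma outer_all (m : ℕ) (s : Finset (Fin (m+1))) (C : Set (Fin (m+1) → ℝ)) (hC : Convex ℝ C)
    (hK : IsCompact C) (hc : C ⊆ cube (m+1)) (ε : ℝ) (hε : 0 ≤ ε) :
    ∃ C' : Set (Fin (m+1) → ℝ), Convex ℝ C' ∧ IsCompact C' ∧ C' ⊆ cube (m+1) ∧
      volume C' ≤ volume C + s.card * ENNReal.ofReal (2 * ε) ∧
      ∀ p ∈ C, ∀ y ∈ cube (m+1), (∀ i ∈ s, |y i - p i| ≤ ε) → (∀ i ∉ s, y i = p i) → y ∈ C' := by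
  classical
  induction s using Finset.induction_on with
  | empty =>
    refine ⟨C, hC, hK, hc, by simp, ?_⟩
    intro p hp y _ _ h
    have : y = p := funext fun i => h i (by simp)
    rwa [this]
  | insert k s hk ih =>
    obtain ⟨D, hD1, hD2, hD3, hD4, hD5⟩ := ih
    obtain ⟨E, hE1, hE2, hE3, -, hE4, hE5⟩ := outer_step m k D hD1 hD2 hD3 ε hε
    refine ⟨E, hE1, hE2, hE3, ?_, ?_⟩
    · rw [Finset.card_insert_of_notMem hk]
      push_cast
      rw [add_mul, one_mul, ← add_assoc]
      exact hE4.trans (by gcongr)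
    · intro p hp y hy h1 h2
      have hq : Function.update y k (p k) ∈ D := by
        apply hD5 p hp
        · intro i
          by_cases hi : i = k
          · subst hi; simpa using hc hp i
          · simpa [hi] using hy i
        · intro i hi
          have : i ≠ k := fun h => hk (h ▸ hi)
          simpa [this] using h1 i (Finset.mem_insert_of_mem hi)
        · intro i hi
          by_cases hik : i = k
          · subst hik; simp
          · simpa [hik] using h2 i (by simp [hik, hi])
      have := hE5 _ hq (y k) (by simpa using h1 k (by simp)) (hy k).1 (hy k).2
      simpa using this

lemma inner_all (m : ℕ) (s : Finset (Fin (m+1))) (C : Set (Fin (m+1) → ℝ)) (hC : Convex ℝ C)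
    (hK : IsOpen C) (hc : C ⊆ cube (m+1)) (ε : ℝ) (hε : 0 ≤ ε) :
    ∃ C' : Set (Fin (m+1) → ℝ), Convex ℝ C' ∧ IsOpen C' ∧ C' ⊆ C ∧
      volume C ≤ volume C' + s.card * ENNReal.ofReal (2 * ε) ∧
      ∀ p ∈ C', ∀ y, (∀ i ∈ s, |y i - p i| ≤ ε) → (∀ i ∉ s, y i = p i) → y ∈ C := by
  classical
  induction s using Finset.induction_on with
  | empty =>
    refine ⟨C, hC, hK, subset_rfl, by simp, ?_⟩
    intro p hp y _ h
    have : y = p := funext fun i => h i (by simp)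
    rwa [this]
  | insert k s hk ih =>
    obtain ⟨D, hD1, hD2, hD3, hD4, hD5⟩ := ih
    obtain ⟨E, hE1, hE2, hE3, hE4, hE5⟩ := inner_step m k D hD1 hD2 (hD3.trans hc) ε hε
    refine ⟨E, hE1, hE2, hE3.trans hD3, ?_, ?_⟩
    · rw [Finset.card_insert_of_notMem hk]
      push_cast
      rw [add_mul, one_mul, add_comm (_ * _) (ENNReal.ofReal _), ← add_assoc]
      exact hD4.trans (by gcongr)
    · intro p hp y h1 h2
      have hq : Function.update p k (y k) ∈ D := hE5 p hp _ (h1 k (by simp))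
      apply hD5 _ hq
      · intro i hi
        have : i ≠ k := fun h => hk (h ▸ hi)
        simpa [this] using h1 i (Finset.mem_insert_of_mem hi)
      · intro i hi
        by_cases hik : i = k
        · subst hik; simp
        · simpa [hik] using h2 i (by simp [hik, hi])

lemma count_bounds (d N : ℕ) (x : Fin N → (Fin d → ℝ)) (S : Set (Fin d → ℝ)) :
    0 ≤ (∑ n : Fin N, Set.indicator S (fun _ => (1 : ℝ)) (x n)) / N ∧
    (∑ n : Fin N, Set.indicator S (fun _ => (1 : ℝ)) (x n)) / N ≤ 1 := by
  constructor
  · apply div_nonneg _ (Nat.cast_nonneg _)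
    exact Finset.sum_nonneg fun n _ => Set.indicator_nonneg (by simp) _
  · apply div_le_one_of_le₀ _ (Nat.cast_nonneg _)
    calc ∑ n : Fin N, Set.indicator S (fun _ => (1 : ℝ)) (x n)
        ≤ ∑ n : Fin N, (1 : ℝ) := Finset.sum_le_sum fun n _ =>
          Set.indicator_le_self' (s := S) (f := fun _ => (1 : ℝ)) (by simp) (x n)
      _ = N := by simp

lemma box_terms_le (d N : ℕ) (x : Fin N → (Fin d → ℝ)) (a b : Fin d → ℝ)
    (h : ∀ i, 0 ≤ a i ∧ a i ≤ b i ∧ b i ≤ 1) :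
    |(∑ n : Fin N, Set.indicator {y | ∀ i, a i ≤ y i ∧ y i < b i}
            (fun _ => (1 : ℝ)) (x n)) / N - ∏ i, (b i - a i)| ≤ 1 := by
  have h1 := count_bounds d N x {y | ∀ i, a i ≤ y i ∧ y i < b i}
  have h2 : 0 ≤ ∏ i, (b i - a i) := Finset.prod_nonneg fun i _ => by linarith [(h i).2.1]
  have h3 : ∏ i, (b i - a i) ≤ 1 := Finset.prod_le_one (fun i _ => by linarith [(h i).2.1])
    (fun i _ => by linarith [(h i).1, (h i).2.2])
  rw [abs_le]
  constructor <;> linarith [h1.1, h1.2]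

lemma iso_terms_le (d N : ℕ) (x : Fin N → (Fin d → ℝ)) (C : Set (Fin d → ℝ))
    (h : C ⊆ cube d) :
    |(∑ n : Fin N, Set.indicator C (fun _ => (1 : ℝ)) (x n)) / N -
      (volume C).toReal| ≤ 1 := by
  have h1 := count_bounds d N x C
  have h2 : (volume C).toReal ≤ 1 := by
    have := (measure_mono h).trans_eq (cube_vol d)
    simpa using ENNReal.toReal_mono (by simp) this
  have h3 : 0 ≤ (volume C).toReal := ENNReal.toReal_nonneg
  rw [abs_le]
  constructor <;> linarith [h1.1, h1.2]

lemma box_le (d N : ℕ) (x : Fin N → (Fin d → ℝ)) (a b : Fin d → ℝ)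
    (h : ∀ i, 0 ≤ a i ∧ a i ≤ b i ∧ b i ≤ 1) :
    |(∑ n : Fin N, Set.indicator {y | ∀ i, a i ≤ y i ∧ y i < b i}
            (fun _ => (1 : ℝ)) (x n)) / N - ∏ i, (b i - a i)| ≤ boxDiscrepancy d N x := by
  apply le_csSup
  · refine ⟨1, ?_⟩
    rintro _ ⟨a, b, h, rfl⟩
    exact box_terms_le d N x a b h
  · exact ⟨a, b, h, rfl⟩

lemma box_disc_le_one (d N : ℕ) (x : Fin N → (Fin d → ℝ)) : boxDiscrepancy d N x ≤ 1 := by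
  apply csSup_le
  · exact ⟨_, 0, 0, by simp, rfl⟩
  · rintro _ ⟨a, b, h, rfl⟩
    exact box_terms_le d N x a b h

lemma box_disc_nonneg (d N : ℕ) (x : Fin N → (Fin d → ℝ)) : 0 ≤ boxDiscrepancy d N x :=
  (abs_nonneg _).trans (box_le d N x 0 0 (by simp))

lemma box_eq_pi (d : ℕ) (a b : Fin d → ℝ) :
    {y : Fin d → ℝ | ∀ i, a i ≤ y i ∧ y i < b i} =
      Set.univ.pi fun i => Set.Ico (a i) (b i) := by
  ext y; simp

lemma box_vol (d : ℕ) (a b : Fin d → ℝ) (h : ∀ i, a i ≤ b i) :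
    (volume {y : Fin d → ℝ | ∀ i, a i ≤ y i ∧ y i < b i}).toReal = ∏ i, (b i - a i) := by
  rw [box_eq_pi, Real.volume_pi_Ico_toReal h]

lemma first_ineq (d N : ℕ) (x : Fin N → (Fin d → ℝ)) :
    boxDiscrepancy d N x ≤ isotropicDiscrepancy d N x := by
  apply csSup_le
  · exact ⟨_, 0, 0, by simp, rfl⟩
  · rintro _ ⟨a, b, h, rfl⟩
    apply le_csSup
    · refine ⟨1, ?_⟩
      rintro _ ⟨C, -, hC, rfl⟩
      exact iso_terms_le d N x C hC
    · refine ⟨{y | ∀ i, a i ≤ y i ∧ y i < b i}, ?_, ?_, ?_⟩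
      · rw [box_eq_pi]
        exact convex_pi fun i _ => convex_Ico _ _
      · intro y hy i
        exact ⟨(h i).1.trans (hy i).1, (hy i).2.le.trans (h i).2.2⟩
      · rw [box_vol d a b fun i => (h i).2.1]

lemma int_interval (r : ℕ) (Q : ℤ → Prop)
    (h : ∀ a b c, a ≤ b → b ≤ c → Q a → Q c → Q b) :
    ∃ α β : ℤ, 0 ≤ α ∧ α ≤ β ∧ β ≤ r ∧ ∀ j : ℤ, 0 ≤ j → j < r → (Q j ↔ α ≤ j ∧ j < β) := by
  classical
  set T := (Finset.Ico (0 : ℤ) r).filter Q with hT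
  by_cases hne : T.Nonempty
  · have h1 := T.min'_mem hne
    have h2 := T.max'_mem hne
    have h3 := T.min'_le_max' hne
    have h4 := h1
    have h5 := h2
    have hmT : ∀ j ∈ T, (0 ≤ j ∧ j < r) ∧ Q j := fun j hj => by
      rw [hT, Finset.mem_filter, Finset.mem_Ico] at hj
      exact hj
    replace h4 := hmT _ h4
    replace h5 := hmT _ h5
    refine ⟨T.min' hne, T.max' hne + 1, h4.1.1, by lia, by lia, ?_⟩
    intro j hj0 hjr
    constructor
    · intro hQ
      have hj : j ∈ T := by simp [hT, hj0, hjr, hQ]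
      have := T.min'_le j hj
      have := T.le_max' j hj
      lia
    · rintro ⟨ha, hb⟩
      exact h _ _ _ ha (by lia) h4.2 h5.2
  · refine ⟨0, 0, le_rfl, le_rfl, by lia, ?_⟩
    intro j hj0 hjr
    constructor
    · intro hQ
      exact absurd ⟨j, by simp [hT, hj0, hjr, hQ]⟩ hne
    · lia

def cellU (d r : ℕ) (P : (Fin d → ℤ) → Prop) : Set (Fin d → ℝ) :=
  {y | (∀ i, 0 ≤ y i ∧ y i < 1) ∧ P (fun i => ⌊(r : ℝ) * y i⌋)}

lemma cell_disc (m N r : ℕ) (hr : 1 ≤ r) (x : Fin N → (Fin (m+1) → ℝ))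
    (P : (Fin (m+1) → ℤ) → Prop)
    (hP : ∀ (z : Fin m → ℤ) (a b c : ℤ), a ≤ b → b ≤ c →
      P (Fin.cons a z) → P (Fin.cons c z) → P (Fin.cons b z)) :
    |(∑ n : Fin N, Set.indicator (cellU (m+1) r P) (fun _ => (1 : ℝ)) (x n)) / N -
      (volume (cellU (m+1) r P)).toReal| ≤ (r : ℝ) ^ m * boxDiscrepancy (m+1) N x := by
  classical
  have hr0 : (0 : ℝ) < r := by exact_mod_cast hr
  choose α β hα hαβ hβ hQ using fun z : Fin m → Fin r =>
    int_interval r (fun j => P (Fin.cons j (fun i => ((z i : ℕ) : ℤ)))) (hP _)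
  let a : (Fin m → Fin r) → Fin (m+1) → ℝ := fun z =>
    Fin.cons ((α z : ℝ) / r) (fun i => (((z i : ℕ) : ℤ) : ℝ) / r)
  let b : (Fin m → Fin r) → Fin (m+1) → ℝ := fun z =>
    Fin.cons ((β z : ℝ) / r) (fun i => ((((z i : ℕ) : ℤ) : ℝ) + 1) / r)
  let B : (Fin m → Fin r) → Set (Fin (m+1) → ℝ) := fun z =>
    {y | ∀ i, a z i ≤ y i ∧ y i < b z i}
  have hab : ∀ z i, 0 ≤ a z i ∧ a z i ≤ b z i ∧ b z i ≤ 1 := by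
    intro z i
    refine Fin.cases ?_ (fun i => ?_) i
    · simp only [a, b, Fin.cons_zero]
      have h1 : (0 : ℝ) ≤ α z := by exact_mod_cast hα z
      have h2 : (α z : ℝ) ≤ β z := by exact_mod_cast hαβ z
      have h3 : (β z : ℝ) ≤ r := by exact_mod_cast hβ z
      exact ⟨by positivity, by gcongr, (div_le_one hr0).2 h3⟩
    · simp only [a, b, Fin.cons_succ]
      have h1 : (((z i : ℕ) : ℤ) : ℝ) + 1 ≤ r := by exact_mod_cast (z i).2
      refine ⟨by positivity, by gcongr; linarith, (div_le_one hr0).2 h1⟩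
  have hmem : ∀ z y, y ∈ B z ↔ (α z ≤ ⌊(r : ℝ) * y 0⌋ ∧ ⌊(r : ℝ) * y 0⌋ < β z) ∧
      ∀ i : Fin m, ⌊(r : ℝ) * y i.succ⌋ = ((z i : ℕ) : ℤ) := by
    intro z y
    simp only [B, Set.mem_ofPred_eq, Fin.forall_fin_succ, a, b, Fin.cons_zero, Fin.cons_succ,
      Int.le_floor, Int.floor_lt, Int.floor_eq_iff, div_le_iff₀' hr0, lt_div_iff₀' hr0]
  have hdisj : Pairwise (Function.onFun Disjoint B) := by
    intro z w hzw
    refine Set.disjoint_left.2 fun y hy hy' => hzw ?_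
    rw [hmem] at hy hy'
    ext i
    have := (hy.2 i).symm.trans (hy'.2 i)
    exact_mod_cast this
  have hU : cellU (m+1) r P = ⋃ z, B z := by
    ext y
    rw [Set.mem_iUnion]
    constructor
    · rintro ⟨hy, hPy⟩
      have hf0 : ∀ i, 0 ≤ ⌊(r : ℝ) * y i⌋ := fun i =>
        Int.floor_nonneg.2 (mul_nonneg hr0.le (hy i).1)
      have hf1 : ∀ i, ⌊(r : ℝ) * y i⌋ < r := fun i => by
        rw [Int.floor_lt]; push_cast; nlinarith [(hy i).2]
      let z : Fin m → Fin r := fun i => ⟨⌊(r : ℝ) * y i.succ⌋.toNat, by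
        have := hf0 i.succ; have := hf1 i.succ; lia⟩
      have hz : ∀ i, ⌊(r : ℝ) * y i.succ⌋ = ((z i : ℕ) : ℤ) := fun i => by
        have := hf0 i.succ
        simp only [z]; lia
      refine ⟨z, (hmem z y).2 ⟨(hQ z _ (hf0 0) (hf1 0)).1 ?_, hz⟩⟩
      convert hPy using 1
      ext i
      refine Fin.cases ?_ (fun i => ?_) i
      · simp
      · simp [hz]
    · rintro ⟨z, hz⟩
      refine ⟨fun i => ⟨(hab z i).1.trans (hz i).1, (hz i).2.trans_le (hab z i).2.2⟩, ?_⟩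
      rw [hmem] at hz
      have h0 : 0 ≤ ⌊(r : ℝ) * y 0⌋ := (hα z).trans hz.1.1
      have h1 : ⌊(r : ℝ) * y 0⌋ < r := hz.1.2.trans_le (hβ z)
      have := (hQ z _ h0 h1).2 hz.1
      convert this using 1
      ext i
      refine Fin.cases ?_ (fun i => ?_) i
      · simp
      · simp [hz.2]
  have hBm : ∀ z, MeasurableSet (B z) := fun z => by
    simp only [B, box_eq_pi]
    exact MeasurableSet.univ_pi fun i => measurableSet_Ico
  have hBfin : ∀ z, volume (B z) ≠ ⊤ := fun z => by
    simp only [B, box_eq_pi, Real.volume_pi_Ico]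
    exact ENNReal.prod_ne_top fun i _ => ENNReal.ofReal_ne_top
  have hvol : (volume (cellU (m+1) r P)).toReal = ∑ z, ∏ i, (b z i - a z i) := by
    rw [hU, measure_iUnion hdisj hBm, tsum_fintype, ENNReal.toReal_sum fun z _ => hBfin z]
    exact Finset.sum_congr rfl fun z _ => box_vol _ _ _ fun i => (hab z i).2.1
  have hind : ∀ y, Set.indicator (cellU (m+1) r P) (fun _ => (1 : ℝ)) y =
      ∑ z, Set.indicator (B z) (fun _ => (1 : ℝ)) y := by
    intro y
    by_cases hy : y ∈ cellU (m+1) r P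
    · rw [Set.indicator_of_mem hy]
      rw [hU, Set.mem_iUnion] at hy
      obtain ⟨z, hz⟩ := hy
      rw [Finset.sum_eq_single z, Set.indicator_of_mem hz]
      · intro w _ hw
        exact Set.indicator_of_notMem (fun h => Set.disjoint_left.1 (hdisj hw) h hz) _
      · simp
    · rw [Set.indicator_of_notMem hy]
      rw [hU, Set.mem_iUnion, not_exists] at hy
      exact (Finset.sum_eq_zero fun z _ => Set.indicator_of_notMem (hy z) _).symm
  rw [hvol]
  simp only [hind]
  rw [Finset.sum_comm, Finset.sum_div, ← Finset.sum_sub_distrib]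
  refine (Finset.abs_sum_le_sum_abs _ _).trans ?_
  calc _ ≤ ∑ z : Fin m → Fin r, boxDiscrepancy (m+1) N x :=
        Finset.sum_le_sum fun z _ => box_le (m+1) N x (a z) (b z) (hab z)
    _ = _ := by simp

lemma floor_close (r : ℕ) (hr : 1 ≤ r) (s t : ℝ) (h : ⌊(r : ℝ) * s⌋ = ⌊(r : ℝ) * t⌋) :
    |s - t| ≤ 1 / r := by
  have hr0 : (0 : ℝ) < r := by exact_mod_cast hr
  have h1 := Int.abs_sub_lt_one_of_floor_eq_floor h
  rw [← mul_sub, abs_mul, abs_of_pos hr0] at h1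
  rw [le_div_iff₀' hr0]
  exact h1.le

lemma outer_P (m r : ℕ) (hr : 1 ≤ r) (C : Set (Fin (m+1) → ℝ)) (hC : Convex ℝ C)
    (z : Fin m → ℤ) (a b c : ℤ) (hab : a ≤ b) (hbc : b ≤ c)
    (ha : ∃ p ∈ C, (fun i => ⌊(r : ℝ) * p i⌋) = (Fin.cons a z : Fin (m+1) → ℤ))
    (hc : ∃ p ∈ C, (fun i => ⌊(r : ℝ) * p i⌋) = (Fin.cons c z : Fin (m+1) → ℤ)) :
    ∃ p ∈ C, (fun i => ⌊(r : ℝ) * p i⌋) = (Fin.cons b z : Fin (m+1) → ℤ) := by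
  have hr0 : (0 : ℝ) < r := by exact_mod_cast hr
  rcases hab.eq_or_lt with rfl | hab
  · exact ha
  rcases hbc.eq_or_lt with rfl | hbc
  · exact hc
  obtain ⟨p, hp, hpa⟩ := ha
  obtain ⟨q, hq, hqc⟩ := hc
  have hp0 : ⌊(r : ℝ) * p 0⌋ = a := by simpa using congrFun hpa 0
  have hq0 : ⌊(r : ℝ) * q 0⌋ = c := by simpa using congrFun hqc 0
  rw [Int.floor_eq_iff] at hp0 hq0
  have h1 : (a : ℝ) + 1 ≤ b := by exact_mod_cast hab
  have h2 : (b : ℝ) + 1 ≤ c := by exact_mod_cast hbc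
  set P := (r : ℝ) * p 0
  set Q := (r : ℝ) * q 0
  have hPb : P < b := by linarith
  have hbQ : b < Q := by linarith
  have hPQ : 0 < Q - P := by linarith
  have hs : 0 ≤ (Q - b) / (Q - P) := div_nonneg (by linarith) hPQ.le
  have ht : 0 ≤ (b - P) / (Q - P) := div_nonneg (by linarith) hPQ.le
  have hst : (Q - b) / (Q - P) + (b - P) / (Q - P) = 1 := by
    rw [← add_div, div_eq_one_iff_eq hPQ.ne']; ring
  have hcomb : (Q - b) / (Q - P) * P + (b - P) / (Q - P) * Q = b := by
    field_simp; ring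
  refine ⟨_, hC hp hq hs ht hst, ?_⟩
  generalize (Q - b) / (Q - P) = s at *
  generalize (b - P) / (Q - P) = t at *
  ext i
  refine Fin.cases ?_ (fun i => ?_) i
  · have : (r : ℝ) * (s • p + t • q) 0 = b := by
      simp only [Pi.add_apply, Pi.smul_apply, smul_eq_mul]
      rw [← hcomb]; simp only [P, Q]; ring
    simp only [this, Int.floor_intCast, Fin.cons_zero]
  · have hpi : ⌊(r : ℝ) * p i.succ⌋ = z i := by simpa using congrFun hpa i.succ
    have hqi : ⌊(r : ℝ) * q i.succ⌋ = z i := by simpa using congrFun hqc i.succ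
    rw [Int.floor_eq_iff] at hpi hqi
    have := (convex_Ico (z i : ℝ) (z i + 1)) (x := (r : ℝ) * p i.succ) hpi
      (y := (r : ℝ) * q i.succ) hqi hs ht hst
    have e : (r : ℝ) * (s • p + t • q) i.succ = s • (r * p i.succ) + t • (r * q i.succ) := by
      simp only [Pi.add_apply, Pi.smul_apply, smul_eq_mul]; ring
    simp only [Fin.cons_succ, Int.floor_eq_iff, e]
    exact this

lemma inner_P (m r : ℕ) (hr : 1 ≤ r) (C : Set (Fin (m+1) → ℝ)) (hC : Convex ℝ C)
    (z : Fin m → ℤ) (a b c : ℤ) (hab : a ≤ b) (hbc : b ≤ c)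
    (ha : ∀ p, (fun i => ⌊(r : ℝ) * p i⌋) = (Fin.cons a z : Fin (m+1) → ℤ) → p ∈ C)
    (hc : ∀ p, (fun i => ⌊(r : ℝ) * p i⌋) = (Fin.cons c z : Fin (m+1) → ℤ) → p ∈ C) :
    ∀ p, (fun i => ⌊(r : ℝ) * p i⌋) = (Fin.cons b z : Fin (m+1) → ℤ) → p ∈ C := by
  have hr0 : (0 : ℝ) < r := by exact_mod_cast hr
  intro p hp
  have hp0 : ⌊(r : ℝ) * p 0⌋ = b := by simpa using congrFun hp 0
  have hpi : ∀ i : Fin m, ⌊(r : ℝ) * p i.succ⌋ = z i := fun i => by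
    simpa using congrFun hp i.succ
  have key : ∀ e : ℤ, (fun i => ⌊(r : ℝ) * (Function.update p 0 (p 0 + ((e - b : ℤ) : ℝ) / r)) i⌋)
      = (Fin.cons e z : Fin (m+1) → ℤ) := by
    intro e
    ext i
    refine Fin.cases ?_ (fun i => ?_) i
    · simp only [Function.update_self, Fin.cons_zero]
      rw [mul_add, mul_div_cancel₀ _ hr0.ne', Int.floor_add_intCast, hp0]; ring
    · simp [hpi]
  have h1 := ha _ (key a)
  have h2 := hc _ (key c)
  have h3 := (fibre_ordConnected C hC 0 p).out h1 h2 (a := p 0) ⟨?_, ?_⟩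
  · simpa using h3
  · have : (((a - b : ℤ) : ℝ)) / r ≤ 0 :=
      div_nonpos_of_nonpos_of_nonneg (by exact_mod_cast (by lia : a - b ≤ 0)) hr0.le
    linarith
  · have : 0 ≤ (((c - b : ℤ) : ℝ)) / r :=
      div_nonneg (by exact_mod_cast (by lia : 0 ≤ c - b)) hr0.le
    linarith

lemma count_mono (d N : ℕ) (x : Fin N → (Fin d → ℝ)) (S T : Set (Fin d → ℝ))
    (h : ∀ n, x n ∈ S → x n ∈ T) :
    (∑ n : Fin N, Set.indicator S (fun _ => (1 : ℝ)) (x n)) / N ≤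
    (∑ n : Fin N, Set.indicator T (fun _ => (1 : ℝ)) (x n)) / N := by
  classical
  refine div_le_div_of_nonneg_right (Finset.sum_le_sum fun n _ => ?_) (Nat.cast_nonneg _)
  simp only [Set.indicator_apply]
  have := h n
  split_ifs <;> simp_all

lemma iso_term_bound (m N r : ℕ) (hr : 1 ≤ r) (x : Fin N → (Fin (m+1) → ℝ))
    (hx : ∀ n i, 0 ≤ x n i ∧ x n i < 1) (C : Set (Fin (m+1) → ℝ)) (hC : Convex ℝ C)
    (hc : C ⊆ cube (m+1)) :
    |(∑ n : Fin N, Set.indicator C (fun _ => (1 : ℝ)) (x n)) / N - (volume C).toReal| ≤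
      (m + 1) * (2 * (1 / r)) + (r : ℝ) ^ m * boxDiscrepancy (m+1) N x := by
  have hr0 : (0 : ℝ) < r := by exact_mod_cast hr
  have hε : (0 : ℝ) < 1 / r := by positivity
  have hfin : ∀ S : Set (Fin (m+1) → ℝ), S ⊆ cube (m+1) → volume S ≠ ⊤ := fun S hS =>
    ne_top_of_le_ne_top (by rw [cube_vol]; simp) (measure_mono hS)
  have hfr : volume (frontier C) = 0 := hC.addHaar_frontier volume
  have hcl : closure C ⊆ cube (m+1) := closure_minimal hc (cube_compact _).isClosed
  have hvcl : volume (closure C) ≤ volume C := by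
    rw [closure_eq_self_union_frontier]
    exact (measure_union_le _ _).trans (by rw [hfr, add_zero])
  have hvin : volume C ≤ volume (interior C) := by
    calc _ ≤ volume (interior C ∪ frontier C) := measure_mono (by
          rw [← closure_eq_interior_union_frontier]; exact subset_closure)
      _ ≤ _ := measure_union_le _ _
      _ = _ := by rw [hfr, add_zero]
  have hconv : ∀ v w : ENNReal, w ≠ ⊤ →
      v ≤ w + (Finset.univ : Finset (Fin (m+1))).card * ENNReal.ofReal (2 * (1 / r)) →
      v.toReal ≤ w.toReal + (m + 1) * (2 * (1 / r)) := by
    intro v w hw h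
    have hne : ((Finset.univ : Finset (Fin (m+1))).card : ENNReal) *
      ENNReal.ofReal (2 * (1 / r)) ≠ ⊤ := ENNReal.mul_ne_top (by simp) ENNReal.ofReal_ne_top
    have := ENNReal.toReal_mono (ENNReal.add_ne_top.2 ⟨hw, hne⟩) h
    rw [ENNReal.toReal_add hw hne, ENNReal.toReal_mul,
      ENNReal.toReal_ofReal (by positivity), ENNReal.toReal_natCast] at this
    simpa using this
  rw [abs_le]
  constructor
  · obtain ⟨E, -, hE2, hE3, hE4, hE5⟩ := inner_all m Finset.univ (interior C) hC.interior
      isOpen_interior (interior_subset.trans hc) (1 / r) hε.le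
    let P : (Fin (m+1) → ℤ) → Prop := fun k => ∀ p, (fun i => ⌊(r : ℝ) * p i⌋) = k → p ∈ C
    have hd := cell_disc m N r hr x P (inner_P m r hr C hC)
    have hEU : E ⊆ cellU (m+1) r P := by
      intro y hy
      refine ⟨fun i => ⟨(hc (interior_subset (hE3 hy)) i).1, ?_⟩, ?_⟩
      · have : y + (fun _ => (1 : ℝ) / r) ∈ interior C :=
          hE5 y hy _ (fun i _ => by simp) (by simp)
        have := (hc (interior_subset this) i).2
        simp only [Pi.add_apply] at this
        linarith
      · intro p hp
        exact interior_subset (hE5 y hy p (fun i _ => floor_close r hr _ _ (congrFun hp i)) (by simp))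
    have hUc : cellU (m+1) r P ⊆ cube (m+1) := fun y hy i => ⟨(hy.1 i).1, (hy.1 i).2.le⟩
    have h1 := count_mono (m+1) N x (cellU (m+1) r P) C (fun n hn => hn.2 _ rfl)
    have h2 := hconv _ _ (hfin _ hUc) (hvin.trans (hE4.trans (by gcongr)))
    rw [abs_le] at hd
    linarith [hd.1]
  · obtain ⟨E, -, hE2, hE3, hE4, hE5⟩ := outer_all m Finset.univ (closure C) hC.closure
      ((cube_compact _).of_isClosed_subset isClosed_closure hcl) hcl (1 / r) hε.le
    let P : (Fin (m+1) → ℤ) → Prop := fun k => ∃ p ∈ C, (fun i => ⌊(r : ℝ) * p i⌋) = k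
    have hd := cell_disc m N r hr x P (outer_P m r hr C hC)
    have hUc : cellU (m+1) r P ⊆ cube (m+1) := fun y hy i => ⟨(hy.1 i).1, (hy.1 i).2.le⟩
    have hUE : cellU (m+1) r P ⊆ E := by
      intro y hy
      obtain ⟨p, hp, hpy⟩ := hy.2
      exact hE5 p (subset_closure hp) y (hUc hy)
        (fun i _ => floor_close r hr _ _ (congrFun hpy i).symm) (by simp)
    have h1 := count_mono (m+1) N x C (cellU (m+1) r P) (fun n hn => ⟨hx n, x n, hn, rfl⟩)
    have h2 := hconv _ _ (hfin _ hc) ((measure_mono hUE).trans (hE4.trans (by gcongr)))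
    rw [abs_le] at hd
    linarith [hd.2]

lemma iso_bound (m N r : ℕ) (hr : 1 ≤ r) (x : Fin N → (Fin (m+1) → ℝ))
    (hx : ∀ n i, 0 ≤ x n i ∧ x n i < 1) :
    isotropicDiscrepancy (m+1) N x ≤
      (m + 1) * (2 * (1 / r)) + (r : ℝ) ^ m * boxDiscrepancy (m+1) N x := by
  apply csSup_le
  · exact ⟨_, ∅, convex_empty, by simp, rfl⟩
  · rintro _ ⟨C, h1, h2, rfl⟩
    exact iso_term_bound m N r hr x hx C h1 h2

lemma second_ineq (m N : ℕ) (x : Fin N → (Fin (m+1) → ℝ))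
    (hx : ∀ n i, 0 ≤ x n i ∧ x n i < 1) :
    isotropicDiscrepancy (m+1) N x ≤ (4 * ((m + 1 : ℕ) : ℝ) * Real.sqrt ((m + 1 : ℕ) : ℝ) + 1) *
      (boxDiscrepancy (m+1) N x) ^ ((1 : ℝ) / ((m + 1 : ℕ) : ℝ)) := by
  have hD0 := box_disc_nonneg (m+1) N x
  have hD1 := box_disc_le_one (m+1) N x
  have hb := fun r hr => iso_bound m N r hr x hx
  generalize boxDiscrepancy (m+1) N x = D at *
  generalize isotropicDiscrepancy (m+1) N x = J at *
  rcases hD0.eq_or_lt with rfl | hDpos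
  · rw [Real.zero_rpow (by positivity), mul_zero]
    have hlim : Filter.Tendsto (fun n : ℕ => ((m : ℝ) + 1) * (2 * (1 / ((n : ℝ) + 1))))
        Filter.atTop (nhds (((m : ℝ) + 1) * (2 * 0))) :=
      (tendsto_one_div_add_atTop_nhds_zero_nat.const_mul 2).const_mul _
    rw [mul_zero, mul_zero] at hlim
    refine ge_of_tendsto' hlim fun n => ?_
    have := hb (n+1) (by lia)
    simpa using this
  · set s := D ^ ((1 : ℝ) / ((m + 1 : ℕ) : ℝ)) with hs
    have hs0 : 0 < s := Real.rpow_pos_of_pos hDpos _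
    have hs1 : s ≤ 1 := Real.rpow_le_one hD0 hD1 (by positivity)
    have hsD : s ^ (m+1) = D := by
      rw [hs, one_div, Real.rpow_inv_natCast_pow hD0 (by lia)]
    have h1s : 1 ≤ 1 / s := (one_le_div hs0).2 hs1
    set r := ⌊1 / s⌋₊ with hrdef
    have hr : 1 ≤ r := Nat.le_floor (by simpa using h1s)
    have hr1 : (1 : ℝ) ≤ r := by exact_mod_cast hr
    have hrs : (r : ℝ) ≤ 1 / s := Nat.floor_le (by positivity)
    have hrs' : 1 / s < r + 1 := Nat.lt_floor_add_one _
    have hA : 1 / (r : ℝ) ≤ 2 * s := by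
      rw [div_le_iff₀ (by linarith)]
      rw [div_lt_iff₀ hs0] at hrs'
      nlinarith
    have hB : (r : ℝ) ^ m * D ≤ s := by
      rw [← hsD, pow_succ, ← mul_assoc, ← mul_pow]
      rw [le_div_iff₀ hs0] at hrs
      have := pow_le_one₀ (n := m) (by positivity : 0 ≤ (r : ℝ) * s) hrs
      nlinarith
    have hsq : 1 ≤ Real.sqrt ((m + 1 : ℕ) : ℝ) := by
      rw [Real.one_le_sqrt]; push_cast; linarith [(Nat.cast_nonneg m : (0 : ℝ) ≤ m)]
    have hm : (0 : ℝ) < m + 1 := by positivity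
    calc J ≤ _ := hb r hr
      _ ≤ (m + 1) * (2 * (2 * s)) + s := by gcongr
      _ = (4 * ((m + 1 : ℕ) : ℝ) * 1 + 1) * s := by push_cast; ring
      _ ≤ _ := by gcongr

/-- For any sequence `x 1, ..., x N` in `𝕋^d`, the isotropic discrepancy `J_N` and the
box discrepancy `D_N` satisfy `D_N ≤ J_N ≤ (4 d √d + 1) D_N^{1/d}`. -/
theorem box_le_isotropic_le (d N : ℕ) (hd : 1 ≤ d) (hN : 1 ≤ N)
    (x : Fin N → (Fin d → ℝ)) (hx : ∀ n i, 0 ≤ x n i ∧ x n i < 1) :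
    boxDiscrepancy d N x ≤ isotropicDiscrepancy d N x ∧
      isotropicDiscrepancy d N x ≤
        (4 * d * Real.sqrt d + 1) * (boxDiscrepancy d N x) ^ ((1 : ℝ) / d) := by
  obtain ⟨m, rfl⟩ : ∃ m, d = m + 1 := ⟨d - 1, by lia⟩
  exact ⟨first_ineq _ N x, second_ineq m N x hx⟩
end

section
/- Irrational rotation on 𝕋^d by a Diophantine vector has polynomially small discrepancy: if α ∈ DC(c,τ) for some c > 0, τ > 1, then there exists δ > 0 such that D_N({θ + nα}_{n=0}^{N−1}) ≤ N^{−δ} for all sufficiently large N, uniformly in θ ∈ 𝕋^d. One may take any δ < 1/(d(τ−1)+1). -/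
/-- distance from a real number to the nearest integer -/
noncomputable def distZ (x : ℝ) : ℝ := |x - round x|

/-- the additive character `e(x) = exp(2πix)` -/
noncomputable def ee (x : ℝ) : ℂ := Complex.exp (Complex.I * ((2 * Real.pi * x : ℝ) : ℂ))

lemma ee_add (x y : ℝ) : ee (x + y) = ee x * ee y := by
  unfold ee
  rw [← Complex.exp_add]
  congr 1
  push_cast
  ring

lemma ee_zero : ee 0 = 1 := by simp [ee]

lemma ee_norm (x : ℝ) : ‖ee x‖ = 1 := by
  unfold ee
  rw [mul_comm]
  exact Complex.norm_exp_ofReal_mul_I _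

lemma ee_int (n : ℤ) : ee n = 1 := by
  unfold ee
  rw [Complex.exp_eq_one_iff]
  exact ⟨n, by push_cast; ring⟩

lemma ee_sum {ι : Type*} (s : Finset ι) (f : ι → ℝ) : ee (∑ i ∈ s, f i) = ∏ i ∈ s, ee (f i) := by
  classical
  induction s using Finset.induction_on with
  | empty => simp [ee_zero]
  | insert a s ha ih => rw [Finset.sum_insert ha, Finset.prod_insert ha, ee_add, ih]

lemma ee_nat_mul (n : ℕ) (x : ℝ) : ee (n * x) = ee x ^ n := by
  unfold ee
  rw [← Complex.exp_nat_mul]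
  congr 1
  push_cast
  ring

lemma ee_continuous : Continuous ee := by
  unfold ee
  fun_prop

lemma ee_sub_one_le (x : ℝ) : ‖ee x - 1‖ ≤ 2 * Real.pi * |x| := by
  have := @Real.norm_exp_I_mul_ofReal_sub_one_le (2 * Real.pi * x)
  rw [Real.norm_eq_abs, abs_mul, abs_of_pos (by positivity : (0:ℝ) < 2 * Real.pi)] at this
  exact this

lemma ee_sub_one_le_two (x : ℝ) : ‖ee x - 1‖ ≤ 2 := by
  calc ‖ee x - 1‖ ≤ ‖ee x‖ + ‖(1:ℂ)‖ := norm_sub_le _ _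
    _ = 2 := by rw [ee_norm]; norm_num

lemma ee_sub_one_ge (x : ℝ) : 4 * distZ x ≤ ‖ee x - 1‖ := by
  have h1 : ee x = ee (x - round x) := by
    have : x = (x - round x) + ((round x : ℤ) : ℝ) := by ring
    conv_lhs => rw [this]
    rw [ee_add, ee_int, mul_one]
  have h2 : |x - round x| ≤ 1 / 2 := abs_sub_round x
  rw [h1]
  unfold ee distZ
  set y := x - round x
  rw [Complex.norm_exp_I_mul_ofReal_sub_one, Real.norm_eq_abs, abs_mul]
  have hpi := Real.pi_pos
  have h3 : |2 * Real.pi * y / 2| = Real.pi * |y| := by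
    rw [show 2 * Real.pi * y / 2 = Real.pi * y by ring, abs_mul, abs_of_pos hpi]
  have h4 := @Real.mul_abs_le_abs_sin (2 * Real.pi * y / 2) (by rw [h3]; nlinarith)
  rw [h3] at h4
  have h5 : 2 / Real.pi * (Real.pi * |y|) = 2 * |y| := by field_simp
  rw [h5] at h4
  rw [abs_of_pos (by norm_num : (0:ℝ) < 2)]
  linarith

lemma geom_bound (x : ℝ) (hx : 0 < distZ x) (N : ℕ) :
    ‖∑ n ∈ Finset.range N, ee (n * x)‖ ≤ 1 / distZ x := by
  have h := mul_neg_geom_sum (ee x) N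
  simp_rw [ee_nat_mul]
  have h1 := ee_sub_one_ge x
  have h2 : ‖1 - ee x‖ * ‖∑ n ∈ Finset.range N, ee x ^ n‖ ≤ 2 := by
    rw [← norm_mul, h]
    calc ‖1 - ee x ^ N‖ ≤ ‖(1:ℂ)‖ + ‖ee x ^ N‖ := norm_sub_le _ _
      _ = 2 := by rw [norm_pow, ee_norm]; norm_num
  rw [norm_sub_rev] at h2
  rw [le_div_iff₀ hx]
  have := norm_nonneg (∑ n ∈ Finset.range N, ee x ^ n)
  nlinarith

lemma hs_conv {f g : ℤ → ℂ} {a b : ℂ} (h : HasSum g b) (h1 : ∀ n, f n = g n) (h2 : a = b) :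
    HasSum f a := by
  rw [show f = g from funext h1, h2]
  exact h

/-- the convex primitive of the floor function -/
noncomputable def Phi (x : ℝ) : ℝ := ⌊x⌋ * x - ⌊x⌋ * (⌊x⌋ + 1) / 2

lemma Phi_subgrad (x y : ℝ) : Phi x + ⌊x⌋ * (y - x) ≤ Phi y := by
  unfold Phi
  have h1 := Int.floor_le y
  have h2 := Int.lt_floor_add_one y
  set n := ⌊x⌋
  set m := ⌊y⌋
  suffices h : 0 ≤ ((m:ℝ) - n) * (y - (m + n + 1) / 2) by nlinarith
  rcases lt_trichotomy m n with h | h | h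
  · have h' : (m:ℝ) + 1 ≤ n := by exact_mod_cast h
    apply mul_nonneg_of_nonpos_of_nonpos <;> linarith
  · simp [h]
  · have h' : (n:ℝ) + 1 ≤ m := by exact_mod_cast h
    apply mul_nonneg <;> linarith

lemma Phi_eq (x : ℝ) : Phi x = x ^ 2 / 2 - x / 2 - (Int.fract x ^ 2 - Int.fract x) / 2 := by
  unfold Phi
  have : Int.fract x = x - ⌊x⌋ := rfl
  rw [this]
  ring

lemma Phi_mono (ε : ℝ) (hε : 0 < ε) : Monotone (fun x => (Phi (x + ε) - Phi x) / ε) := by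
  intro x y hxy
  apply div_le_div_of_nonneg_right _ hε.le
  have a1 := Phi_subgrad y (y + ε)
  have a2 := Phi_subgrad (x + ε) x
  have a3 := Phi_subgrad (x + ε) (y + ε)
  have a4 := Phi_subgrad y x
  rcases le_total (x + ε) y with h | h
  · have : (⌊x + ε⌋ : ℝ) ≤ ⌊y⌋ := by exact_mod_cast Int.floor_le_floor h
    nlinarith
  · have : (⌊y⌋ : ℝ) ≤ ⌊x + ε⌋ := by exact_mod_cast Int.floor_le_floor h
    nlinarith

lemma hasSum_fract (x : ℝ) : HasSum (fun n : ℤ => (1 / (n:ℂ) ^ 2) * ee (n * x))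
    (2 * Real.pi ^ 2 * ((Int.fract x ^ 2 - Int.fract x + 6⁻¹ : ℝ) : ℂ)) := by
  have h := hasSum_one_div_pow_mul_fourier_mul_bernoulliFun (k := 2) le_rfl (x := Int.fract x)
    ⟨Int.fract_nonneg x, (Int.fract_lt_one x).le⟩
  rw [bernoulliFun_two] at h
  convert h using 1
  · funext n
    rw [fourier_coe_apply]
    congr 1
    have : (n:ℝ) * x = n * Int.fract x + ((n * ⌊x⌋ : ℤ) : ℝ) := by
      have : Int.fract x = x - ⌊x⌋ := rfl
      rw [this]; push_cast; ring
    rw [this, ee_add, ee_int, mul_one]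
    unfold ee
    congr 1
    push_cast
    ring
  · simp only [Nat.factorial]
    rw [mul_pow, Complex.I_sq]
    push_cast
    ring

lemma step_bound {ε : ℝ} (hε : 0 < ε) (n : ℤ) (hn : n ≠ 0) :
    ‖(1 / (2 * Real.pi * ε * n) : ℂ) * (ee (n * ε) - 1)‖ ≤ min 1 (1 / (ε * |(n:ℝ)|)) := by
  have hn' : 0 < |(n:ℝ)| := by positivity
  have hpi := Real.pi_gt_three
  rw [norm_mul]
  have h1 : ‖(1 / (2 * Real.pi * ε * n) : ℂ)‖ = 1 / (2 * Real.pi * ε * |(n:ℝ)|) := by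
    simp [abs_of_pos hε, abs_of_pos Real.pi_pos]
  rw [h1]
  have h2 := ee_sub_one_le (n * ε)
  have h3 := ee_sub_one_le_two (n * ε)
  rw [abs_mul, abs_of_pos hε] at h2
  rw [div_mul_eq_mul_div, one_mul]
  apply le_min
  · rw [div_le_one (by positivity)]; nlinarith
  · rw [div_le_div_iff₀ (by positivity) (by positivity)]
    have : 0 < ε * |(n:ℝ)| := by positivity
    nlinarith

/-- existence of a smoothed floor function -/
lemma exists_smooth (ε : ℝ) (hε : 0 < ε) (k : ℕ) : ∃ (G : ℝ → ℝ) (t : ℤ → ℂ), Monotone G ∧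
    (∀ x, (⌊x⌋ : ℝ) ≤ G x ∧ G x ≤ ⌊x + (k + 1) * ε⌋) ∧
    (∀ x, HasSum (fun n : ℤ => t n * ee (n * x)) ((G x - x : ℝ) : ℂ)) ∧
    (∀ n : ℤ, n ≠ 0 → ‖t n‖ ≤ 1 / |(n:ℝ)| * (min 1 (1 / (ε * |(n:ℝ)|))) ^ (k + 1)) := by
  induction k with
  | zero =>
    refine ⟨fun x => (Phi (x + ε) - Phi x) / ε,
      fun n => (-(1 / (4 * Real.pi ^ 2 * ε) : ℂ) * (ee (n * ε) - 1) * (1 / (n:ℂ) ^ 2)) +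
        if n = 0 then ((ε / 2 - 1 / 2 : ℝ) : ℂ) else 0, Phi_mono ε hε, ?_, ?_, ?_⟩
    · intro x
      have a1 := Phi_subgrad x (x + ε)
      have a2 := Phi_subgrad (x + ε) x
      constructor
      · rw [le_div_iff₀ hε]; nlinarith
      · simp only [Nat.cast_zero, zero_add, one_mul]
        rw [div_le_iff₀ hε]; nlinarith
    · intro x
      have h1 := (((hasSum_fract (x + ε)).sub (hasSum_fract x)).mul_left
        (-(1 / (4 * Real.pi ^ 2 * ε) : ℂ))).add
        (hasSum_ite_eq (0:ℤ) ((ε / 2 - 1 / 2 : ℝ) : ℂ))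
      refine hs_conv h1 (fun n => ?_) ?_
      · beta_reduce
        rw [add_mul, ite_mul, zero_mul]
        congr 1
        · rw [mul_add, ee_add]; ring
        · by_cases h : n = 0
          · simp [h, ee_zero]
          · simp [h]
      · beta_reduce
        rw [Phi_eq, Phi_eq]
        have : (ε : ℂ) ≠ 0 := by exact_mod_cast hε.ne'
        have : (Real.pi : ℂ) ≠ 0 := by exact_mod_cast Real.pi_ne_zero
        push_cast
        field_simp
        ring
    · intro n hn
      have hn' : (n:ℂ) ≠ 0 := by exact_mod_cast hn
      have hn2 : 0 < |(n:ℝ)| := by positivity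
      have hpi := Real.pi_gt_three
      have : (ε : ℂ) ≠ 0 := by exact_mod_cast hε.ne'
      have : (Real.pi : ℂ) ≠ 0 := by exact_mod_cast Real.pi_ne_zero
      have e1 : (-(1 / (4 * Real.pi ^ 2 * ε) : ℂ) * (ee (n * ε) - 1) * (1 / (n:ℂ) ^ 2)) +
        (if n = 0 then ((ε / 2 - 1 / 2 : ℝ) : ℂ) else 0) =
        (-(1 / (2 * Real.pi * n)) : ℂ) * ((1 / (2 * Real.pi * ε * n) : ℂ) * (ee (n * ε) - 1)) := by
        simp only [hn, if_false, add_zero]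
        field_simp
        ring
      beta_reduce
      rw [e1, norm_mul, zero_add, pow_one]
      apply mul_le_mul _ (step_bound hε n hn) (norm_nonneg _) (by positivity)
      have h1 : ‖(-(1 / (2 * Real.pi * n)) : ℂ)‖ = 1 / (2 * Real.pi * |(n:ℝ)|) := by
        simp [abs_of_pos Real.pi_pos]
      rw [h1]
      apply one_div_le_one_div_of_le hn2
      nlinarith
  | succ k ih =>
    obtain ⟨G, t, hG, hb, hs, ht⟩ := ih
    have hmono : ∀ x, Monotone (fun s : ℝ => G (x + ε * s)) := fun x s s' h => hG (by nlinarith)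
    have hint : ∀ x, IntervalIntegrable (fun s : ℝ => G (x + ε * s)) MeasureTheory.volume 0 1 :=
      fun x => (hmono x).intervalIntegrable
    have hsummable : Summable (fun n => ‖t n‖) := by
      have := (hs 0).summable.norm
      simpa [ee_zero] using this
    let lam : ℤ → ℂ := fun n => ∫ s in (0:ℝ)..1, ee (n * (ε * s))
    have hlam : ∀ n : ℤ, n ≠ 0 → ‖lam n‖ ≤ min 1 (1 / (ε * |(n:ℝ)|)) := by
      intro n hn
      have hn' : (n:ℂ) ≠ 0 := by exact_mod_cast hn
      have h1 : (ε : ℂ) ≠ 0 := by exact_mod_cast hε.ne'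
      have h2 : (Real.pi : ℂ) ≠ 0 := by exact_mod_cast Real.pi_ne_zero
      have : lam n = (-Complex.I) * ((1 / (2 * Real.pi * ε * n) : ℂ) * (ee (n * ε) - 1)) := by
        have h3 := @integral_exp_mul_complex 0 1 (Complex.I * (2 * Real.pi * n * ε))
          (by simp [hn', h1, h2])
        simp only [lam]
        have h4 : ∀ s : ℝ, ee (n * (ε * s)) = Complex.exp (Complex.I * (2 * Real.pi * n * ε) * s) := by
          intro s
          unfold ee
          congr 1
          push_cast
          ring
        simp_rw [h4]
        rw [h3]
        unfold ee
        simp only [Complex.ofReal_zero, mul_zero, Complex.exp_zero, Complex.ofReal_one, mul_one]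
        have h5 : Complex.I * (2 * Real.pi * n * ε) = Complex.I * ((2 * Real.pi * (n * ε) : ℝ) : ℂ) := by
          push_cast; ring
        rw [← h5]
        have hI := Complex.I_ne_zero
        have hI2 := Complex.I_sq
        field_simp
        rw [hI2]; ring
      rw [this, norm_mul, norm_neg, Complex.norm_I, one_mul]
      exact step_bound hε n hn
    refine ⟨fun x => ∫ s in (0:ℝ)..1, G (x + ε * s),
      fun n => t n * lam n + if n = 0 then ((ε / 2 : ℝ) : ℂ) else 0, ?_, ?_, ?_, ?_⟩
    · intro x y hxy
      apply intervalIntegral.integral_mono_on (by norm_num) (hint x) (hint y)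
      intro s _
      exact hG (by linarith)
    · intro x
      constructor
      · calc (⌊x⌋ : ℝ) = ∫ s in (0:ℝ)..1, (⌊x⌋ : ℝ) := by simp
          _ ≤ _ := by
            apply intervalIntegral.integral_mono_on (by norm_num) (by simp) (hint x)
            intro s hs'
            refine le_trans ?_ (hb _).1
            exact_mod_cast Int.floor_le_floor (by nlinarith [hs'.1])
      · calc _ ≤ ∫ s in (0:ℝ)..1, (⌊x + ((k + 1 : ℕ) + 1) * ε⌋ : ℝ) := by
              apply intervalIntegral.integral_mono_on (by norm_num) (hint x) (by simp)
              intro s hs'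
              refine le_trans (hb _).2 ?_
              exact_mod_cast Int.floor_le_floor (by push_cast; nlinarith [hs'.2])
          _ = _ := by simp
    · intro x
      let f : ℤ → C(ℝ, ℂ) := fun n => ⟨fun s => t n * ee (n * (x + ε * s)), by
        have := ee_continuous; fun_prop⟩
      have h1 := intervalIntegral.hasSum_intervalIntegral_of_summable_norm (a := 0) (b := 1) (f := f)
        (by
          refine Summable.of_nonneg_of_le (fun _ => norm_nonneg _) (fun n => ?_) hsummable
          rw [ContinuousMap.norm_le _ (norm_nonneg _)]
          intro s
          simp [f, ee_norm])
      have h2 : ∀ s : ℝ, ∑' n, f n s = ((G (x + ε * s) - (x + ε * s) : ℝ) : ℂ) :=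
        fun s => (hs (x + ε * s)).tsum_eq
      simp_rw [h2] at h1
      rw [intervalIntegral.integral_ofReal, intervalIntegral.integral_sub (hint x)
        (by apply Continuous.intervalIntegrable; fun_prop)] at h1
      have h3 : ∫ s in (0:ℝ)..1, (x + ε * s) = x + ε / 2 := by
        rw [intervalIntegral.integral_add (by simp)
          (by apply Continuous.intervalIntegrable; fun_prop)]
        rw [intervalIntegral.integral_const_mul, integral_id]
        simp
        ring
      rw [h3] at h1
      have h4 := h1.add (hasSum_ite_eq (0:ℤ) ((ε / 2 : ℝ) : ℂ))
      refine hs_conv h4 (fun n => ?_) ?_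
      · beta_reduce
        rw [add_mul, ite_mul, zero_mul]
        congr 1
        · simp only [f, lam, ContinuousMap.coe_mk]
          rw [mul_assoc, mul_comm (∫ s in (0:ℝ)..1, ee (n * (ε * s))), ← mul_assoc,
            ← intervalIntegral.integral_const_mul]
          congr 1
          funext s
          rw [mul_add, ee_add]; ring
        · by_cases h : n = 0
          · simp [h, ee_zero]
          · simp [h]
      · push_cast; ring
    · intro n hn
      simp only [hn, if_false, add_zero]
      rw [norm_mul, pow_succ _ (k + 1), ← mul_assoc]
      exact mul_le_mul (ht n hn) (hlam n hn) (norm_nonneg _) (by positivity)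

lemma sep_sum (p : ℝ) (hp : 1 < p) : ∃ C : ℝ, 0 ≤ C ∧ ∀ {ι : Type} (A : Finset ι) (x : ι → ℝ) (η : ℝ),
    0 < η → (∀ i ∈ A, η ≤ |x i|) → (∀ i ∈ A, ∀ j ∈ A, i ≠ j → η ≤ |x i - x j|) →
    ∑ i ∈ A, |x i| ^ (-p) ≤ C * η ^ (-p) := by
  classical
  have hsum := Real.summable_abs_int_rpow hp
  have hnn : ∀ n : ℤ, 0 ≤ |(n:ℝ)| ^ (-p) := fun n => by positivity
  refine ⟨(1 / 2 : ℝ) ^ (-p) * ∑' n : ℤ, |(n:ℝ)| ^ (-p), mul_nonneg (by positivity) (tsum_nonneg hnn), ?_⟩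
  intro ι A x η hη h1 h2
  let m : ι → ℤ := fun i => ⌊x i / η⌋
  have hm : ∀ i ∈ A, |x i| ^ (-p) ≤ (1 / 2 : ℝ) ^ (-p) * η ^ (-p) * |(m i : ℝ)| ^ (-p) := by
    intro i hi
    have hx := h1 i hi
    have f1 := Int.floor_le (x i / η)
    have f2 := Int.lt_floor_add_one (x i / η)
    rw [le_div_iff₀ hη] at f1
    rw [div_lt_iff₀ hη] at f2
    have key : 0 < |(m i : ℝ)| ∧ 1 / 2 * η * |(m i : ℝ)| ≤ |x i| := by
      simp only [m]
      set k := ⌊x i / η⌋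
      rcases le_abs.1 hx with h | h
      · have hk : (0:ℤ) < k := by
          by_contra hcon
          have : (k:ℝ) ≤ 0 := by exact_mod_cast not_lt.1 hcon
          have : k + 1 ≤ (1:ℤ) := by linarith [not_lt.1 hcon]
          nlinarith
        have hk' : (0:ℝ) < k := by exact_mod_cast hk
        rw [abs_of_pos hk', abs_of_pos (by linarith)]
        exact ⟨hk', by nlinarith⟩
      · have hk' : (k:ℝ) < 0 := by
          by_contra hcon
          nlinarith [not_lt.1 hcon]
        rw [abs_of_neg hk', abs_of_neg (by linarith)]
        exact ⟨by linarith, by nlinarith⟩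
    rw [← Real.mul_rpow (by norm_num) hη.le, ← Real.mul_rpow (by positivity) (abs_nonneg _)]
    apply Real.rpow_le_rpow_of_nonpos (by have := key.1; positivity) key.2 (by linarith)
  have hinj : Set.InjOn m A := by
    intro i hi j hj hij
    by_contra hne
    have h3 := Int.abs_sub_lt_one_of_floor_eq_floor hij
    have h4 := h2 i hi j hj hne
    rw [← sub_div, abs_div, abs_of_pos hη, div_lt_one hη] at h3
    linarith
  calc ∑ i ∈ A, |x i| ^ (-p) ≤ ∑ i ∈ A, (1 / 2 : ℝ) ^ (-p) * η ^ (-p) * |(m i : ℝ)| ^ (-p) :=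
        Finset.sum_le_sum hm
    _ = (1 / 2 : ℝ) ^ (-p) * η ^ (-p) * ∑ n ∈ A.image m, |(n : ℝ)| ^ (-p) := by
        rw [← Finset.mul_sum, Finset.sum_image hinj]
    _ ≤ (1 / 2 : ℝ) ^ (-p) * η ^ (-p) * ∑' n : ℤ, |(n : ℝ)| ^ (-p) := by
        apply mul_le_mul_of_nonneg_left _ (by positivity)
        exact hsum.sum_le_tsum _ (fun n _ => hnn n)
    _ = _ := by ring

lemma series_bound (d : ℕ) (α : Fin d → ℝ)
    (c τ : ℝ) (hc : 0 < c) (hτ : 1 < τ)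
    (hDC : ∀ h : Fin d → ℤ, h ≠ 0 →
      c / (∏ j, max (|(h j : ℝ)|) 1) ^ τ ≤ distZ (∑ j, (h j : ℝ) * α j)) (κ : ℝ) (hκ : 0 < κ) :
    ∃ C : ℝ, 0 ≤ C ∧ ∀ F : Finset (Fin d → ℤ), (∀ h ∈ F, h ≠ 0) →
      ∑ h ∈ F, (∏ j, max (|(h j : ℝ)|) 1) ^ (-(τ + κ)) * (1 / distZ (∑ j, (h j : ℝ) * α j)) ≤ C := by
  classical
  have hτ0 : 0 < τ := by linarith
  set p : ℝ := 1 + κ / (2 * τ) with hp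
  have hp1 : 1 < p := by
    have : 0 < κ / (2 * τ) := by positivity
    linarith
  obtain ⟨C, hC, hsep⟩ := sep_sum p hp1
  set q : ℝ := (2:ℝ) ^ (-(κ / 2)) with hq
  have hq0 : 0 < q := by positivity
  have hq1 : q < 1 := Real.rpow_lt_one_of_one_lt_of_neg (by norm_num) (by linarith)
  set C' : ℝ := C * (c ^ (-p) * ((4:ℝ) ^ d) ^ (τ * p)) with hC'
  have hC'0 : 0 ≤ C' := by positivity
  refine ⟨C' * ∏ _j : Fin d, (1 - q)⁻¹, mul_nonneg hC'0
    (Finset.prod_nonneg fun _ _ => inv_nonneg.2 (by linarith)), ?_⟩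
  intro F hF
  let S : (Fin d → ℤ) → (Fin d → ℕ) := fun h j => Nat.log 2 (h j).natAbs
  let L : ℕ := (F.sup fun h => Finset.univ.sup (S h)) + 1
  have hmaps : ∀ h ∈ F, S h ∈ Fintype.piFinset (fun _ : Fin d => Finset.range L) := by
    intro h hh
    rw [Fintype.mem_piFinset]
    intro j
    rw [Finset.mem_range]
    have h1 : S h j ≤ Finset.univ.sup (S h) := Finset.le_sup (f := S h) (Finset.mem_univ j)
    have h2 : Finset.univ.sup (S h) ≤ F.sup fun h => Finset.univ.sup (S h) :=
      Finset.le_sup (f := fun h => Finset.univ.sup (S h)) hh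
    simp only [L]
    omega
  have hlow : ∀ (h : Fin d → ℤ) j, (2:ℝ) ^ (S h j) ≤ max (|(h j : ℝ)|) 1 := by
    intro h j
    simp only [S]
    rcases eq_or_ne (h j) 0 with h0 | h0
    · simp [h0]
    · apply le_max_of_le_left
      have := Nat.pow_log_le_self 2 (Int.natAbs_ne_zero.2 h0)
      have h2 : ((2 ^ Nat.log 2 (h j).natAbs : ℕ) : ℝ) ≤ (((h j).natAbs : ℕ) : ℝ) := by exact_mod_cast this
      rw [Nat.cast_natAbs] at h2
      push_cast at h2
      exact h2
  have hup : ∀ (h : Fin d → ℤ) j, |(h j : ℝ)| ≤ 2 * (2:ℝ) ^ (S h j) := by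
    intro h j
    simp only [S]
    have := (Nat.lt_pow_succ_log_self (b := 2) (by norm_num) (h j).natAbs).le
    have h2 : (((h j).natAbs : ℕ) : ℝ) ≤ ((2 ^ (Nat.log 2 (h j).natAbs + 1) : ℕ) : ℝ) := by exact_mod_cast this
    rw [Nat.cast_natAbs, pow_succ] at h2
    push_cast at h2
    linarith
  rw [← Finset.sum_fiberwise_of_maps_to hmaps]
  have hclass : ∀ s ∈ Fintype.piFinset (fun _ : Fin d => Finset.range L),
      ∑ h ∈ F with S h = s, (∏ j, max (|(h j : ℝ)|) 1) ^ (-(τ + κ)) *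
        (1 / distZ (∑ j, (h j : ℝ) * α j)) ≤ C' * ∏ j, q ^ (s j) := by
    intro s _
    set R : ℝ := ∏ j, (2:ℝ) ^ (s j) with hR
    have hR0 : 0 < R := Finset.prod_pos fun _ _ => by positivity
    set η : ℝ := c / ((4:ℝ) ^ d * R) ^ τ with hη
    have hη0 : 0 < η := by positivity
    let x : (Fin d → ℤ) → ℝ := fun h => (∑ j, (h j : ℝ) * α j) - round (∑ j, (h j : ℝ) * α j)
    have hgen : ∀ g : Fin d → ℤ, g ≠ 0 → (∀ j, |(g j : ℝ)| ≤ 4 * 2 ^ (s j)) →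
        η ≤ distZ (∑ j, (g j : ℝ) * α j) := by
      intro g hg hgs
      refine le_trans ?_ (hDC g hg)
      have hpos : 0 < ∏ j, max (|(g j : ℝ)|) 1 := Finset.prod_pos fun _ _ => by positivity
      apply div_le_div_of_nonneg_left hc.le (by positivity)
      apply Real.rpow_le_rpow hpos.le _ hτ0.le
      calc ∏ j, max (|(g j : ℝ)|) 1 ≤ ∏ j, (4 * (2:ℝ) ^ (s j)) := by
            apply Finset.prod_le_prod (fun _ _ => by positivity)
            intro j _
            apply max_le (hgs j)
            have : (1:ℝ) ≤ 2 ^ (s j) := one_le_pow₀ (by norm_num)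
            linarith
        _ = _ := by rw [Finset.prod_mul_distrib]; simp [hR]
    have hx : ∀ h ∈ F.filter (fun h => S h = s), η ≤ |x h| := by
      intro h hh
      rw [Finset.mem_filter] at hh
      apply hgen h (hF h hh.1)
      intro j
      have := hup h j
      rw [hh.2] at this
      have : (0:ℝ) < 2 ^ (s j) := by positivity
      linarith
    have hx2 : ∀ h ∈ F.filter (fun h => S h = s), ∀ h' ∈ F.filter (fun h => S h = s), h ≠ h' →
        η ≤ |x h - x h'| := by
      intro h hh h' hh' hne
      rw [Finset.mem_filter] at hh hh'
      have h1 := hgen (h - h') (sub_ne_zero.2 hne) (by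
        intro j
        have a1 := hup h j
        have a2 := hup h' j
        rw [hh.2] at a1
        rw [hh'.2] at a2
        have a3 := abs_sub (h j : ℝ) (h' j)
        simp only [Pi.sub_apply]
        push_cast
        linarith)
      refine le_trans h1 ?_
      refine le_trans (round_le _ (round (∑ j, (h j : ℝ) * α j) - round (∑ j, (h' j : ℝ) * α j))) ?_
      apply le_of_eq
      congr 1
      simp only [x, Pi.sub_apply]
      push_cast
      simp_rw [sub_mul]
      rw [Finset.sum_sub_distrib]
      ring
    have hmain := hsep _ x η hη0 hx hx2
    have hR1 : R ^ (-(τ + κ)) * (C * η ^ (-p)) = C' * ∏ j, q ^ (s j) := by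
      have e1 : η ^ (-p) = c ^ (-p) * ((4:ℝ) ^ d) ^ (τ * p) * R ^ (τ * p) := by
        rw [hη, Real.div_rpow hc.le (by positivity), ← Real.rpow_mul (by positivity),
          mul_neg, Real.rpow_neg (by positivity) (τ * p), div_inv_eq_mul,
          Real.mul_rpow (by positivity) hR0.le]
        ring
      have e2 : ∏ j, q ^ (s j) = R ^ (-(κ / 2)) := by
        rw [hR, ← Real.finsetProd_rpow _ _ (fun _ _ => by positivity)]
        apply Finset.prod_congr rfl
        intro j _
        rw [hq, ← Real.rpow_natCast, ← Real.rpow_natCast, ← Real.rpow_mul (by norm_num),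
          ← Real.rpow_mul (by norm_num), mul_comm]
      have e3 : R ^ (-(τ + κ)) * R ^ (τ * p) = R ^ (-(κ / 2)) := by
        rw [← Real.rpow_add hR0]
        congr 1
        rw [hp]
        field_simp
        ring
      rw [e1, e2, ← e3, hC']
      ring
    rw [← hR1]
    refine le_trans ?_ (mul_le_mul_of_nonneg_left hmain (by positivity))
    rw [Finset.mul_sum]
    apply Finset.sum_le_sum
    intro h hh
    have hxh := hx h hh
    have hdist : distZ (∑ j, (h j : ℝ) * α j) = |x h| := rfl
    have hle1 : |x h| ≤ 1 := le_trans (abs_sub_round _) (by norm_num)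
    have hxpos : 0 < |x h| := by linarith
    apply mul_le_mul _ _ (by rw [hdist]; positivity) (by positivity)
    · apply Real.rpow_le_rpow_of_nonpos hR0 _ (by linarith)
      rw [hR]
      apply Finset.prod_le_prod (fun _ _ => by positivity)
      intro j _
      rw [Finset.mem_filter] at hh
      rw [← hh.2]
      exact hlow h j
    · rw [hdist, one_div, ← Real.rpow_neg_one]
      exact Real.rpow_le_rpow_of_exponent_ge hxpos hle1 (by linarith)
  refine le_trans (Finset.sum_le_sum hclass) ?_
  rw [← Finset.mul_sum]
  apply mul_le_mul_of_nonneg_left _ hC'0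
  rw [← Finset.prod_univ_sum (fun _ : Fin d => Finset.range L) (fun _ n => q ^ n)]
  apply Finset.prod_le_prod (fun _ _ => by positivity)
  intro _ _
  rw [← tsum_geometric_of_lt_one hq0.le hq1]
  exact (summable_geometric_of_lt_one hq0.le hq1).sum_le_tsum _ (fun n _ => by positivity)

lemma fourier_est (d : ℕ) (α : Fin d → ℝ)
    (hpos : ∀ h : Fin d → ℤ, h ≠ 0 → 0 < distZ (∑ j, (h j : ℝ) * α j))
    (ρ C : ℝ)
    (hC : ∀ F : Finset (Fin d → ℤ), (∀ h ∈ F, h ≠ 0) →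
      ∑ h ∈ F, (∏ j, max (|(h j : ℝ)|) 1) ^ (-ρ) * (1 / distZ (∑ j, (h j : ℝ) * α j)) ≤ C)
    (B : ℝ) (hB : 0 ≤ B) (v : Fin d → ℤ → ℂ) (g : Fin d → ℝ → ℝ)
    (hv : ∀ i n, ‖v i n‖ ≤ B * (max (|(n : ℝ)|) 1) ^ (-ρ))
    (hg : ∀ i x, HasSum (fun n : ℤ => v i n * ee (n * x)) ((g i x : ℝ) : ℂ))
    (θ : Fin d → ℝ) (N : ℕ) :
    ‖(∑ n ∈ Finset.range N, ∏ i, ((g i (θ i + n * α i) : ℝ) : ℂ)) - N * ∏ i, v i 0‖ ≤ B ^ d * C := by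
  classical
  have htend : Filter.Tendsto (fun s : Finset ℤ =>
      (∑ n ∈ Finset.range N, ∏ i, ∑ h ∈ s, v i h * ee (h * (θ i + n * α i))) - N * ∏ i, v i 0)
      Filter.atTop (nhds ((∑ n ∈ Finset.range N, ∏ i, ((g i (θ i + n * α i) : ℝ) : ℂ)) -
        N * ∏ i, v i 0)) := by
    apply Filter.Tendsto.sub_const
    apply tendsto_finsetSum
    intro n _
    apply tendsto_finsetProd
    intro i _
    exact hg i _
  refine le_of_tendsto htend.norm ?_
  filter_upwards [Filter.eventually_ge_atTop ({0} : Finset ℤ)] with s hs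
  have h0 : (0 : Fin d → ℤ) ∈ Fintype.piFinset (fun _ : Fin d => s) := by
    rw [Fintype.mem_piFinset]
    intro j
    exact hs (by simp)
  have e1 : (∑ n ∈ Finset.range N, ∏ i, ∑ h ∈ s, v i h * ee (h * (θ i + n * α i))) =
      ∑ h ∈ Fintype.piFinset (fun _ : Fin d => s), (∏ i, v i (h i)) * ee (∑ j, (h j : ℝ) * θ j) *
        ∑ n ∈ Finset.range N, ee (n * ∑ j, (h j : ℝ) * α j) := by
    simp_rw [Finset.prod_univ_sum]
    rw [Finset.sum_comm]
    apply Finset.sum_congr rfl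
    intro h _
    rw [Finset.mul_sum]
    apply Finset.sum_congr rfl
    intro n _
    rw [Finset.prod_mul_distrib, ← ee_sum, mul_assoc, ← ee_add]
    congr 2
    rw [Finset.mul_sum, ← Finset.sum_add_distrib]
    apply Finset.sum_congr rfl
    intro j _
    ring
  rw [e1, ← Finset.add_sum_erase _ _ h0]
  have e2 : (∏ i, v i ((0 : Fin d → ℤ) i)) * ee (∑ j, (((0 : Fin d → ℤ) j : ℤ) : ℝ) * θ j) *
        ∑ n ∈ Finset.range N, ee (n * ∑ j, (((0 : Fin d → ℤ) j : ℤ) : ℝ) * α j) = N * ∏ i, v i 0 := by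
    simp [ee_zero, mul_comm]
  rw [e2, add_sub_cancel_left]
  set F := (Fintype.piFinset (fun _ : Fin d => s)).erase 0
  have hF : ∀ h ∈ F, h ≠ 0 := fun h hh => (Finset.mem_erase.1 hh).1
  refine le_trans (norm_sum_le _ _) ?_
  refine le_trans ?_ (mul_le_mul_of_nonneg_left (hC F hF) (by positivity))
  rw [Finset.mul_sum]
  apply Finset.sum_le_sum
  intro h hh
  rw [norm_mul, norm_mul, ee_norm, mul_one, ← mul_assoc]
  apply mul_le_mul _ (geom_bound _ (hpos h (hF h hh)) N) (norm_nonneg _) (by positivity)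
  rw [norm_prod, ← Real.finsetProd_rpow _ _ (fun _ _ => by positivity)]
  calc ∏ i, ‖v i (h i)‖ ≤ ∏ i, (B * (max (|(h i : ℝ)|) 1) ^ (-ρ)) :=
        Finset.prod_le_prod (fun _ _ => norm_nonneg _) (fun i _ => hv i (h i))
    _ = _ := by rw [Finset.prod_mul_distrib]; simp

lemma coef_bound {ε σ : ℝ} (hε : 0 < ε) (hσ : 0 < σ) {k : ℕ} (hk : σ ≤ k + 1)
    (n : ℤ) (hn : n ≠ 0) :
    1 / |(n:ℝ)| * (min 1 (1 / (ε * |(n:ℝ)|))) ^ (k + 1) ≤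
      ε ^ (-σ) * (max (|(n : ℝ)|) 1) ^ (-(1 + σ)) := by
  have hn0 : 0 < |(n:ℝ)| := by positivity
  have hn1 : 1 ≤ |(n:ℝ)| := by
    have := Int.one_le_abs hn
    exact_mod_cast this
  rw [max_eq_left hn1]
  set y : ℝ := min 1 (1 / (ε * |(n:ℝ)|)) with hy
  have hy0 : 0 < y := by positivity
  have hy1 : y ≤ 1 := min_le_left _ _
  have h1 : y ^ (k + 1) ≤ (1 / (ε * |(n:ℝ)|)) ^ σ := by
    calc y ^ (k + 1) = y ^ ((k:ℝ) + 1) := by rw [← Real.rpow_natCast]; push_cast; rfl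
      _ ≤ y ^ σ := Real.rpow_le_rpow_of_exponent_ge hy0 hy1 hk
      _ ≤ _ := Real.rpow_le_rpow hy0.le (min_le_right _ _) hσ.le
  have h2 : (1 / (ε * |(n:ℝ)|)) ^ σ = ε ^ (-σ) * |(n:ℝ)| ^ (-σ) := by
    rw [one_div, Real.inv_rpow (by positivity), ← Real.rpow_neg (by positivity),
      Real.mul_rpow hε.le hn0.le]
  have h3 : |(n:ℝ)| ^ (-(1 + σ)) = 1 / |(n:ℝ)| * |(n:ℝ)| ^ (-σ) := by
    rw [neg_add, Real.rpow_add hn0, Real.rpow_neg_one, one_div]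
  rw [h3]
  calc 1 / |(n:ℝ)| * y ^ (k + 1) ≤ 1 / |(n:ℝ)| * (ε ^ (-σ) * |(n:ℝ)| ^ (-σ)) :=
        mul_le_mul_of_nonneg_left (h2 ▸ h1) (by positivity)
    _ = _ := by ring

lemma prod_shift {ι : Type*} (s : Finset ι) (u : ι → ℝ) (η : ℝ) (hη : 0 ≤ η) (hη1 : η ≤ 1)
    (hu : ∀ i ∈ s, 0 ≤ u i ∧ u i ≤ 1) :
    ∏ i ∈ s, (u i + η) ≤ ∏ i ∈ s, u i + (2 ^ s.card - 1) * η := by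
  classical
  induction s using Finset.induction_on with
  | empty => simp
  | insert a s ha ih =>
    rw [Finset.prod_insert ha, Finset.prod_insert ha, Finset.card_insert_of_notMem ha]
    have ih' := ih (fun i hi => hu i (Finset.mem_insert_of_mem hi))
    have hua := hu a (Finset.mem_insert_self a s)
    have hQ1 : ∏ i ∈ s, u i ≤ 1 := Finset.prod_le_one
      (fun i hi => (hu i (Finset.mem_insert_of_mem hi)).1)
      (fun i hi => (hu i (Finset.mem_insert_of_mem hi)).2)
    have hK : (1:ℝ) ≤ 2 ^ s.card := one_le_pow₀ (by norm_num)
    set K : ℝ := 2 ^ s.card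
    set Q := ∏ i ∈ s, u i
    have h1 : (u a + η) * ∏ i ∈ s, (u i + η) ≤ (u a + η) * (Q + (K - 1) * η) :=
      mul_le_mul_of_nonneg_left ih' (by linarith)
    have h2 : (u a + η) * ((K - 1) * η) ≤ 2 * ((K - 1) * η) :=
      mul_le_mul_of_nonneg_right (by linarith) (mul_nonneg (by linarith) hη)
    have h3 : η * Q ≤ η * 1 := mul_le_mul_of_nonneg_left hQ1 hη
    rw [pow_succ]
    change _ ≤ u a * Q + (K * 2 - 1) * η
    nlinarith

lemma ind_floor (x a b : ℝ) (ha : 0 ≤ a) (hab : a ≤ b) (hb : b ≤ 1) :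
    ((⌊x - a⌋ : ℝ) - ⌊x - b⌋) = if a ≤ Int.fract x ∧ Int.fract x < b then 1 else 0 := by
  have h0 := Int.fract_nonneg x
  have h1 := Int.fract_lt_one x
  have key : ∀ a : ℝ, 0 ≤ a → a ≤ 1 → (⌊x - a⌋ : ℝ) = ⌊x⌋ + if a ≤ Int.fract x then 0 else -1 := by
    intro a ha ha1
    have hx : x = ⌊x⌋ + Int.fract x := (Int.floor_add_fract x).symm
    split_ifs with h
    · have : ⌊x - a⌋ = ⌊x⌋ := by
        rw [Int.floor_eq_iff]
        constructor <;> linarith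
      rw [this]; ring
    · have : ⌊x - a⌋ = ⌊x⌋ - 1 := by
        rw [Int.floor_eq_iff]
        push_cast
        push Not at h
        constructor <;> linarith
      rw [this]; push_cast; ring
  rw [key a ha (by linarith), key b (by linarith) hb]
  by_cases c1 : a ≤ Int.fract x <;> by_cases c2 : b ≤ Int.fract x
  · simp [c1, c2]
  · simp [c1, c2, not_le.1 c2]
  · exact absurd (hab.trans c2) c1
  · simp [c1, c2]

lemma box_est (d : ℕ) (α : Fin d → ℝ)
    (hpos : ∀ h : Fin d → ℤ, h ≠ 0 → 0 < distZ (∑ j, (h j : ℝ) * α j))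
    (σ C : ℝ) (hσ : 0 < σ) (k : ℕ) (hk : σ ≤ k + 1)
    (hC : ∀ F : Finset (Fin d → ℤ), (∀ h ∈ F, h ≠ 0) →
      ∑ h ∈ F, (∏ j, max (|(h j : ℝ)|) 1) ^ (-(1 + σ)) * (1 / distZ (∑ j, (h j : ℝ) * α j)) ≤ C)
    (ε : ℝ) (hε : 0 < ε) (hε1 : ε ≤ 1)
    (G : ℝ → ℝ) (t : ℤ → ℂ)
    (hs : ∀ x, HasSum (fun n : ℤ => t n * ee (n * x)) ((G x - x : ℝ) : ℂ))
    (ht : ∀ n : ℤ, n ≠ 0 → ‖t n‖ ≤ 1 / |(n:ℝ)| * (min 1 (1 / (ε * |(n:ℝ)|))) ^ (k + 1))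
    (A B : Fin d → ℝ) (hAB : ∀ i, |B i - A i| ≤ 2) (θ : Fin d → ℝ) (N : ℕ) (hN : 0 < N) :
    |(∑ n ∈ Finset.range N, ∏ i, (G (θ i + n * α i - A i) - G (θ i + n * α i - B i))) / N -
      ∏ i, (B i - A i)| ≤ (2 * ε ^ (-σ)) ^ d * C / N := by
  have hε1' : 1 ≤ ε ^ (-σ) := Real.one_le_rpow_of_pos_of_le_one_of_nonpos hε hε1 (by linarith)
  have h := fourier_est d α hpos (1 + σ) C hC (2 * ε ^ (-σ)) (by positivity)
    (fun i n => t n * (ee (-(n * A i)) - ee (-(n * B i))) +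
      if n = 0 then ((B i - A i : ℝ) : ℂ) else 0)
    (fun i x => G (x - A i) - G (x - B i)) ?_ ?_ θ N
  · have hN' : (0:ℝ) < N := by exact_mod_cast hN
    have e : (∑ n ∈ Finset.range N, ∏ i, (G (θ i + n * α i - A i) - G (θ i + n * α i - B i))) / N -
      ∏ i, (B i - A i) = ((∑ n ∈ Finset.range N,
        ∏ i, (G (θ i + n * α i - A i) - G (θ i + n * α i - B i))) - N * ∏ i, (B i - A i)) / N := by
      field_simp
    rw [e, abs_div, abs_of_pos hN']
    apply div_le_div_of_nonneg_right _ hN'.le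
    rw [← Real.norm_eq_abs, ← Complex.norm_real]
    refine le_trans (le_of_eq ?_) h
    congr 1
    push_cast
    simp [ee_zero]
  · intro i n
    beta_reduce
    rcases eq_or_ne n 0 with rfl | hn
    · simp only [Int.cast_zero, zero_mul, neg_zero, sub_self, mul_zero, if_true, zero_add,
        abs_zero, zero_le_one, max_eq_right, Real.one_rpow, mul_one]
      rw [Complex.norm_real, Real.norm_eq_abs]
      have := hAB i
      linarith
    · simp only [hn, if_false, add_zero]
      rw [norm_mul]
      have h1 : ‖ee (-(n * A i)) - ee (-(n * B i))‖ ≤ 2 := by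
        refine le_trans (norm_sub_le _ _) ?_
        rw [ee_norm, ee_norm]; norm_num
      have h2 := (ht n hn).trans (coef_bound hε hσ hk n hn)
      calc ‖t n‖ * ‖ee (-(n * A i)) - ee (-(n * B i))‖
          ≤ (ε ^ (-σ) * (max (|(n : ℝ)|) 1) ^ (-(1 + σ))) * 2 :=
            mul_le_mul h2 h1 (norm_nonneg _) (by positivity)
        _ = _ := by ring
  · intro i x
    have h1 := ((hs (x - A i)).sub (hs (x - B i))).add
      (hasSum_ite_eq (0:ℤ) ((B i - A i : ℝ) : ℂ))
    refine hs_conv h1 (fun n => ?_) ?_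
    · beta_reduce
      rw [add_mul, ite_mul, zero_mul]
      congr 1
      · rw [show (n:ℝ) * (x - A i) = -(n * A i) + n * x by ring,
          show (n:ℝ) * (x - B i) = -(n * B i) + n * x by ring, ee_add, ee_add]
        ring
      · by_cases h : n = 0
        · simp [h, ee_zero]
        · simp [h]
    · push_cast; ring

/-- Diophantine rotation on `𝕋^d` has polynomially small discrepancy: if
`‖⟨h,α⟩‖ ≥ c / r(h)^τ` for all nonzero `h ∈ ℤ^d` (with `r(h) = ∏ max(|h_j|,1)`, `τ > 1`),
then for any `0 < δ < 1/(d(τ-1)+1)` and all large `N`, uniformly in `θ`, the box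
discrepancy of `{θ + nα}_{n=0}^{N-1}` is at most `N^{-δ}`. -/
theorem diophantine_rotation_discrepancy (d : ℕ) (hd : 1 ≤ d) (α : Fin d → ℝ)
    (c τ : ℝ) (hc : 0 < c) (hτ : 1 < τ)
    (hDC : ∀ h : Fin d → ℤ, h ≠ 0 →
      c / (∏ j, max (|(h j : ℝ)|) 1) ^ τ ≤ distZ (∑ j, (h j : ℝ) * α j)) :
    ∀ δ : ℝ, 0 < δ → δ < 1 / (d * (τ - 1) + 1) →
      ∃ N₀ : ℕ, ∀ N : ℕ, N₀ ≤ N → ∀ θ : Fin d → ℝ,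
        ∀ a b : Fin d → ℝ, (∀ i, 0 ≤ a i ∧ a i ≤ b i ∧ b i ≤ 1) →
          |(∑ n ∈ Finset.range N,
              Set.indicator {y : Fin d → ℝ | ∀ i, a i ≤ y i ∧ y i < b i}
                (fun _ => (1 : ℝ)) (fun i => Int.fract (θ i + n * α i))) / (N : ℝ) -
            ∏ i, (b i - a i)| ≤ (N : ℝ) ^ (-δ) := by
  intro δ hδ hδ1
  have hd0 : (0:ℝ) < d := by exact_mod_cast hd
  obtain ⟨δ', h1, h2⟩ := exists_between hδ1
  have hδ'0 : 0 < δ' := by linarith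
  set σ : ℝ := (1 / δ' - 1) / d with hσ
  have hσd : δ' * (d * σ) = 1 - δ' := by
    rw [hσ]; field_simp
  have hden : 0 < d * (τ - 1) + 1 := by
    have := mul_pos hd0 (sub_pos.2 hτ)
    linarith
  have hστ : τ - 1 < σ := by
    rw [lt_div_iff₀ hden] at h2
    rw [hσ, lt_div_iff₀ hd0, lt_sub_iff_add_lt, lt_div_iff₀ hδ'0]
    linarith
  have hσ0 : 0 < σ := by linarith
  obtain ⟨C, hC0, hC⟩ := series_bound d α c τ hc hτ hDC (σ - (τ - 1)) (by linarith)
  rw [show τ + (σ - (τ - 1)) = 1 + σ by ring] at hC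
  obtain ⟨k, hk⟩ := exists_nat_ge σ
  have hk' : σ ≤ (k:ℝ) + 1 := by linarith
  have hpos : ∀ h : Fin d → ℤ, h ≠ 0 → 0 < distZ (∑ j, (h j : ℝ) * α j) := by
    intro h hh
    refine lt_of_lt_of_le ?_ (hDC h hh)
    have : 0 < ∏ j, max (|(h j : ℝ)|) 1 := Finset.prod_pos fun _ _ => by positivity
    positivity
  set K : ℝ := 2 ^ d * ((k + 1) + C) with hK
  have hev : ∀ᶠ N : ℕ in Filter.atTop, K ≤ (N:ℝ) ^ (δ' - δ) :=
    ((tendsto_rpow_atTop (sub_pos.2 h1)).comp tendsto_natCast_atTop_atTop).eventually_ge_atTop K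
  obtain ⟨N₀, hN₀⟩ := Filter.eventually_atTop.1 hev
  refine ⟨max N₀ 1, fun N hN θ a b hab => ?_⟩
  have hN1 : 1 ≤ N := le_trans (le_max_right _ _) hN
  have hNK := hN₀ N (le_trans (le_max_left _ _) hN)
  have hNr : (1:ℝ) ≤ N := by exact_mod_cast hN1
  have hN0 : (0:ℝ) < N := by linarith
  set ε : ℝ := (N:ℝ) ^ (-δ') with hεdef
  have hε0 : 0 < ε := by positivity
  have hKε : K * ε ≤ (N:ℝ) ^ (-δ) := by
    calc K * ε ≤ (N:ℝ) ^ (δ' - δ) * ε := mul_le_mul_of_nonneg_right hNK hε0.le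
      _ = _ := by rw [hεdef, ← Real.rpow_add hN0]; congr 1; ring
  have hNδ1 : (N:ℝ) ^ (-δ) ≤ 1 := Real.rpow_le_one_of_one_le_of_nonpos hNr (by linarith)
  have h2d : (1:ℝ) ≤ 2 ^ d := one_le_pow₀ (by norm_num)
  have hk0 : (0:ℝ) ≤ k := Nat.cast_nonneg k
  have hηK : ((k:ℝ) + 1) ≤ K := by rw [hK]; nlinarith
  set η : ℝ := (k + 1) * ε with hη
  have hη0 : 0 ≤ η := by positivity
  have hηδ : η ≤ (N:ℝ) ^ (-δ) := le_trans (mul_le_mul_of_nonneg_right hηK hε0.le) hKε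
  have hη1 : η ≤ 1 := hηδ.trans hNδ1
  have hε1 : ε ≤ 1 := by nlinarith
  have herr : (2 * ε ^ (-σ)) ^ d * C / N = 2 ^ d * C * ε := by
    have e1 : (ε ^ (-σ)) ^ d = (N:ℝ) ^ (1 - δ') := by
      rw [hεdef, ← Real.rpow_natCast, ← Real.rpow_mul hN0.le, ← Real.rpow_mul hN0.le, ← hσd]
      congr 1
      ring
    have e2 : (N:ℝ) ^ (1 - δ') = N * ε := by
      rw [hεdef, sub_eq_add_neg, Real.rpow_add hN0, Real.rpow_one]
    rw [mul_pow, e1, e2]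
    field_simp
  have htot : 2 ^ d * η + 2 ^ d * C * ε = K * ε := by rw [hη, hK]; ring
  obtain ⟨G, t, hG, hGb, hs, ht⟩ := exists_smooth ε hε0 k
  have hest := fun A B hAB => box_est d α hpos σ C hσ0 k hk' hC ε hε0 hε1 G t hs ht A B hAB θ N hN1
  rw [herr] at hest
  -- the indicator as a product of differences of floors
  have hind : ∀ n : ℕ, Set.indicator {y : Fin d → ℝ | ∀ i, a i ≤ y i ∧ y i < b i}
      (fun _ => (1 : ℝ)) (fun i => Int.fract (θ i + n * α i)) =
      ∏ i, ((⌊θ i + n * α i - a i⌋ : ℝ) - ⌊θ i + n * α i - b i⌋) := by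
    intro n
    have : ∀ i, ((⌊θ i + n * α i - a i⌋ : ℝ) - ⌊θ i + n * α i - b i⌋) = _ :=
      fun i => ind_floor (θ i + n * α i) (a i) (b i) (hab i).1 (hab i).2.1 (hab i).2.2
    simp_rw [this]
    rw [Finset.prod_ite_zero]
    simp [Set.indicator_apply]
  simp_rw [hind]
  have hfl : ∀ (n : ℕ) i, 0 ≤ ((⌊θ i + n * α i - a i⌋ : ℝ) - ⌊θ i + n * α i - b i⌋) := by
    intro n i
    have : (⌊θ i + n * α i - b i⌋ : ℝ) ≤ ⌊θ i + n * α i - a i⌋ := by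
      exact_mod_cast Int.floor_le_floor (by linarith [(hab i).2.1])
    linarith
  set S : ℝ := ∑ n ∈ Finset.range N,
    ∏ i, ((⌊θ i + n * α i - a i⌋ : ℝ) - ⌊θ i + n * α i - b i⌋) with hS
  have hS0 : 0 ≤ S := Finset.sum_nonneg fun n _ => Finset.prod_nonneg fun i _ => hfl n i
  refine le_trans ?_ hKε
  rw [abs_le]
  constructor
  · by_cases hcase : ∀ i, η ≤ b i - a i
    · have h3 := (abs_le.1 (hest (fun i => a i + η) b (fun i => by
        have := hab i; have := hcase i; rw [abs_le]; constructor <;> linarith))).1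
      have h4 : (∑ n ∈ Finset.range N, ∏ i, (G (θ i + n * α i - (a i + η)) -
          G (θ i + n * α i - b i))) / N ≤ S / N := by
        apply div_le_div_of_nonneg_right _ hN0.le
        apply Finset.sum_le_sum
        intro n _
        apply Finset.prod_le_prod
        · intro i _
          have := hG (show θ i + n * α i - b i ≤ θ i + n * α i - (a i + η) by linarith [hcase i])
          linarith
        · intro i _
          have g1 := (hGb (θ i + n * α i - (a i + η))).2
          have g2 := (hGb (θ i + n * α i - b i)).1
          rw [← hη, show θ i + n * α i - (a i + η) + η = θ i + n * α i - a i by ring] at g1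
          linarith
      have h5 := prod_shift Finset.univ (fun i => b i - (a i + η)) η hη0 hη1 (fun i _ => by
        have := hab i; have := hcase i; constructor <;> linarith)
      have h6 : ∀ i, b i - (a i + η) + η = b i - a i := fun i => by ring
      simp_rw [h6] at h5
      simp only [Finset.card_univ, Fintype.card_fin] at h5
      linarith
    · push Not at hcase
      obtain ⟨i, hi⟩ := hcase
      have h3 : ∏ i, (b i - a i) ≤ b i - a i := by
        rw [← Finset.mul_prod_erase _ _ (Finset.mem_univ i)]
        apply mul_le_of_le_one_right (by linarith [(hab i).2.1])
        apply Finset.prod_le_one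
        · intro j _; linarith [(hab j).2.1]
        · intro j _; linarith [(hab j).1, (hab j).2.2]
      have h4 : 0 ≤ S / N := by positivity
      have h5 : η ≤ K * ε := mul_le_mul_of_nonneg_right hηK hε0.le
      linarith
  · have h3 := (abs_le.1 (hest a (fun i => b i + η) (fun i => by
        have := hab i; rw [abs_le]; constructor <;> linarith))).2
    have h4 : S / N ≤ (∑ n ∈ Finset.range N, ∏ i, (G (θ i + n * α i - a i) -
        G (θ i + n * α i - (b i + η)))) / N := by
      apply div_le_div_of_nonneg_right _ hN0.le
      apply Finset.sum_le_sum
      intro n _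
      apply Finset.prod_le_prod (fun i _ => hfl n i)
      intro i _
      have g1 := (hGb (θ i + n * α i - (b i + η))).2
      have g2 := (hGb (θ i + n * α i - a i)).1
      rw [← hη, show θ i + n * α i - (b i + η) + η = θ i + n * α i - b i by ring] at g1
      linarith
    have h5 := prod_shift Finset.univ (fun i => b i - a i) η hη0 hη1 (fun i _ => by
      have := hab i; constructor <;> linarith)
    have h6 : ∀ i, b i - a i + η = b i + η - a i := fun i => by ring
    simp_rw [h6] at h5
    simp only [Finset.card_univ, Fintype.card_fin] at h5
    linarith
end
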